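/- arXiv:0810.1981 — 3 statements merged into one kernel-verified Lean document; each statement's English description precedes it below -/
import Mathlib

section
/- There exists an n-uniform hypergraph H with maximum neighborhood size 2^(n-2) + 2^(n-3) on which Maker has a winning strategy in the Maker–Breaker game; hence the Neighborhood Conjecture (that maximum neighborhood size below 2^(n-1) implies a Breaker win) is false. -/
/-!
The vertices are the nodes of a binary tree in which every inner node has two children, and every
leaf contributes the edge consisting of the last `n` nodes on the path from the root to it. Maker
wins by climbing from the root: whenever he claims a node, Breaker's answer lies above at most one
of its two children, so Maker continues with the other child and ends up owning the whole path to a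
leaf.

With `n = m + 3`, the tree starts as a full binary tree of height `m + 1`. One child of each of its
top nodes `u` is a short leaf, while the other one is the root of a full binary tree of height `m`.
One child of each top node `v` of that tree is a middle leaf, whose edge starts at `u`, and the
other one is the root of a full binary tree of height `m + 1`, whose top nodes are long leaves with
edges starting at `v`. Two edges meet exactly if the start of the one reaching higher lies below
the leaf of the other. Hence the edges meeting a given edge number at most `2 ^ (m + 1) + 2 ^ m`,
and middle leaves attain this bound.
-/

def MakerWinsAux {V : Type} [DecidableEq V] (E : Finset (Finset V)) :
    ℕ → Finset V → Finset V → Prop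
  | 0, M, _ => ∃ e ∈ E, e ⊆ M
  | k+1, M, U =>
      (∃ e ∈ E, e ⊆ M) ∨
      ∃ v ∈ U, (∃ e ∈ E, e ⊆ insert v M) ∨
        ((U.erase v).Nonempty ∧
          ∀ w ∈ U.erase v, MakerWinsAux E k (insert v M) ((U.erase v).erase w))

/-- Maker (moving first) has a winning strategy in the Maker-Breaker game on the
hypergraph with edge set `E`, played on the board `B`. -/
def MakerWins {V : Type} [DecidableEq V] (E : Finset (Finset V)) (B : Finset V) : Prop :=
  MakerWinsAux E B.card ∅ B

namespace NeighborhoodConjecture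

section Neighborhood

variable {V : Type*} [DecidableEq V]

/-- The neighborhood `N(e)` of `e` in the hypergraph with edge set `E`. -/
def neighborhood (E : Finset (Finset V)) (e : Finset V) : Finset (Finset V) :=
  E.filter fun f => f ≠ e ∧ (e ∩ f).Nonempty

lemma card_neighborhood_image_add_one {ι : Type*} {g : ι → Finset V}
    (hg : Function.Injective g) {S : Finset ι} {i : ι} (hi : i ∈ S) (hne : (g i).Nonempty) :
    (neighborhood (S.image g) (g i)).card + 1 = {j ∈ S | (g i ∩ g j).Nonempty}.card := by
  classical
  have himage : neighborhood (S.image g) (g i)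
      = ({j ∈ S | (g i ∩ g j).Nonempty}.erase i).image g := by
    rw [neighborhood, Finset.filter_image]
    congr 1
    ext j
    simp only [Finset.mem_filter, Finset.mem_erase, hg.ne_iff]
    tauto
  rw [himage, Finset.card_image_of_injective _ hg, Finset.card_erase_add_one]
  simpa using ⟨hi, hne⟩

end Neighborhood

section Words

variable {α : Type*}

lemma suffix_append_iff_of_length_eq {x s t : List α} (h : x.length = t.length) :
    x <:+ s ++ t ↔ x = t := by
  simpa using List.suffix_append_inj_of_length_eq (l₁ := []) (l₂ := s) h

lemma exists_not_cons_suffix [Nontrivial α] (p w : List α) : ∃ b : α, ¬ (b :: p <:+ w) := by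
  obtain ⟨b, b', hne⟩ := exists_pair_ne α
  by_contra! hall
  have heq := (List.suffix_of_suffix_length_le (hall b) (hall b') (by simp)).eq_of_length
    (by simp)
  exact hne (List.cons.inj heq).1

lemma append_cons_inj_of_length_eq {a a' u u' : List α} {b : α} (h : u.length = u'.length) :
    a ++ b :: u = a' ++ b :: u' ↔ a = a' ∧ u = u' := by
  rw [List.append_eq_append_iff_of_size_eq_right (by simp [h]), List.cons_inj_right]

lemma exists_suffix_length_eq [Nonempty α] {p : List α} {k : ℕ} (hp : p.length ≤ k) :
    ∃ q, q.length = k ∧ p <:+ q := by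
  obtain ⟨b⟩ := ‹Nonempty α›
  exact ⟨p.leftpad k b, by rw [List.length_leftpad, max_eq_left hp], List.leftpad_suffix⟩

variable [DecidableEq α]

/-- The finite set of all words of length `k`. -/
def words (α : Type*) [DecidableEq α] [Fintype α] (k : ℕ) : Finset (List α) :=
  (Finset.univ : Finset (List.Vector α k)).image List.Vector.toList

lemma mem_words [Fintype α] {k : ℕ} {l : List α} : l ∈ words α k ↔ l.length = k := by
  simp only [words, Finset.mem_image, Finset.mem_univ, true_and]
  exact ⟨fun ⟨v, hv⟩ => hv ▸ v.toList_length, fun h => ⟨⟨l, h⟩, rfl⟩⟩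

lemma card_words [Fintype α] (k : ℕ) : (words α k).card = Fintype.card α ^ k := by
  rw [words, Finset.card_image_of_injective _ List.Vector.toList_injective, Finset.card_univ,
    card_vector]

/-- The last `n` nodes on the path from the root to `L`, in the tree of words where the children of
`p` are the words `b :: p`: the ancestors of a word are its suffixes. -/
def pathEdge (n : ℕ) (L : List α) : Finset (List α) :=
  (Finset.range n).image fun i => L.drop i

lemma mem_pathEdge {n : ℕ} {L x : List α} :
    x ∈ pathEdge n L ↔ x <:+ L ∧ L.length < x.length + n := by
  simp only [pathEdge, Finset.mem_image, Finset.mem_range]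
  constructor
  · rintro ⟨i, hi, rfl⟩
    exact ⟨List.drop_suffix _ _, by grind⟩
  · rintro ⟨hx, hlen⟩
    have hle := hx.length_le
    exact ⟨L.length - x.length, by lia, (List.suffix_iff_eq_drop.1 hx).symm⟩

lemma self_mem_pathEdge {n : ℕ} (hn : 0 < n) (L : List α) : L ∈ pathEdge n L :=
  mem_pathEdge.2 ⟨List.suffix_rfl, by lia⟩

lemma card_pathEdge {n : ℕ} {L : List α} (hL : n ≤ L.length + 1) : (pathEdge n L).card = n := by
  rw [pathEdge, Finset.card_image_of_injOn, Finset.card_range]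
  intro i hi j hj hij
  have hlen := congrArg List.length hij
  simp only [List.length_drop, Finset.coe_range, Set.mem_Iio] at hlen hi hj
  lia

lemma pathEdge_injective {n : ℕ} (hn : 0 < n) :
    Function.Injective (pathEdge n : List α → Finset (List α)) := by
  intro L L' h
  have hsuffix : L <:+ L' := (mem_pathEdge.1 (h ▸ self_mem_pathEdge hn L)).1
  have hsuffix' : L' <:+ L := (mem_pathEdge.1 (h ▸ self_mem_pathEdge hn L')).1
  exact hsuffix.eq_of_length_le hsuffix'.length_le

lemma pathEdge_inter_nonempty_iff {n : ℕ} {L L' t : List α} (ht : t <:+ L)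
    (hlen : L.length + 1 = t.length + n) (hle : L'.length ≤ L.length) :
    (pathEdge n L ∩ pathEdge n L').Nonempty ↔ t <:+ L' := by
  constructor
  · rintro ⟨x, hx⟩
    simp only [Finset.mem_inter, mem_pathEdge] at hx
    obtain ⟨⟨hxL, hxlen⟩, hxL', -⟩ := hx
    exact (List.suffix_of_suffix_length_le ht hxL (by lia)).trans hxL'
  · intro ht'
    exact ⟨t, Finset.mem_inter.2 ⟨mem_pathEdge.2 ⟨ht, by lia⟩, mem_pathEdge.2 ⟨ht', by lia⟩⟩⟩

end Words

section Climbing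

variable {α : Type} [DecidableEq α] [Nontrivial α] {E : Finset (Finset (List α))}
  {T : Set (List α)}

lemma makerWinsAux_of_branching
    (hT : ∀ p ∈ T, (∃ e ∈ E, ∀ x ∈ e, x <:+ p) ∨ ∀ b, b :: p ∈ T) (k : ℕ)
    {M U : Finset (List α)} {p : List α} (hk : U.card ≤ k) (hp : p ∈ T)
    (hfree : ∀ q ∈ T, p <:+ q → q ∈ U) (hbelow : ∀ q, q <:+ p → q ≠ p → q ∈ M) :
    MakerWinsAux E k M U := by
  induction k generalizing M U p with
  | zero =>
    have hpos := Finset.card_pos.2 ⟨p, hfree p hp List.suffix_rfl⟩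
    lia
  | succ k ih =>
    have hpU : p ∈ U := hfree p hp List.suffix_rfl
    have hclaimed (q) (hq : q <:+ p) : q ∈ insert p M :=
      Finset.mem_insert.2 (or_iff_not_imp_left.2 (hbelow q hq))
    refine Or.inr ⟨p, hpU, ?_⟩
    rcases hT p hp with ⟨e, he, hep⟩ | hchild
    · exact Or.inl ⟨e, he, fun x hx => hclaimed x (hep x hx)⟩
    · have hstill_free (b : α) {q} (hq : q ∈ T) (hbq : b :: p <:+ q) : q ∈ U.erase p := by
        refine Finset.mem_erase.2 ⟨?_, hfree q hq ((List.suffix_cons b p).trans hbq)⟩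
        rintro rfl
        simpa using hbq.length_le
      obtain ⟨b₀⟩ : Nonempty α := inferInstance
      refine Or.inr ⟨⟨_, hstill_free b₀ (hchild b₀) List.suffix_rfl⟩, fun w hw => ?_⟩
      obtain ⟨b, hbw⟩ := exists_not_cons_suffix p w
      refine ih (p := b :: p) ?_ (hchild b) ?_ ?_
      · rw [Finset.card_erase_of_mem hw, Finset.card_erase_of_mem hpU]
        lia
      · intro q hq hbq
        exact Finset.mem_erase.2 ⟨fun hqw => hbw (hqw ▸ hbq), hstill_free b hq hbq⟩
      · intro q hq hne
        exact hclaimed q ((List.suffix_cons_iff.1 hq).resolve_left hne)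

lemma makerWins_of_branching {B : Finset (List α)} (hroot : [] ∈ T) (hTB : ∀ p ∈ T, p ∈ B)
    (hT : ∀ p ∈ T, (∃ e ∈ E, ∀ x ∈ e, x <:+ p) ∨ ∀ b, b :: p ∈ T) : MakerWins E B :=
  makerWinsAux_of_branching hT _ le_rfl hroot (fun q hq _ => hTB q hq)
    fun _ hq hne => (hne (List.suffix_nil.1 hq)).elim

end Climbing

section Leaves

/-- The leaf attached to the top node `u` of the bottom tree. -/
def shortLeaf (u : List Bool) : List Bool := true :: u

/-- The leaf attached to the top node `a ++ false :: u` of the tree rooted at `false :: u`. -/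
def middleLeaf (a u : List Bool) : List Bool := true :: (a ++ false :: u)

/-- The node reached by following `c` from the root of the tree above `a ++ false :: u`. It is a
leaf if `c` has full length. -/
def longLeaf (c a u : List Bool) : List Bool := c ++ false :: (a ++ false :: u)

/-- All short leaves of the tree for `n = m + 3`. -/
def shortLeaves (m : ℕ) : Finset (List Bool) := (words Bool (m + 1)).image shortLeaf

/-- The middle leaves of the tree for `n = m + 3` that lie above `u`. -/
def middleLeaves (m : ℕ) (u : List Bool) : Finset (List Bool) :=
  (words Bool m).image fun a => middleLeaf a u

/-- The long leaves of the tree for `n = m + 3` that lie above `a ++ false :: u`. -/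
def longLeaves (m : ℕ) (a u : List Bool) : Finset (List Bool) :=
  (words Bool (m + 1)).image fun c => longLeaf c a u

/-- All leaves of the tree for `n = m + 3`. -/
def leaves (m : ℕ) : Finset (List Bool) :=
  shortLeaves m ∪ (words Bool (m + 1)).biUnion fun u =>
    middleLeaves m u ∪ (words Bool m).biUnion fun a => longLeaves m a u

/-- Membership in `leaves m` as an inductive predicate, for case analysis on the kind of leaf. -/
inductive IsLeaf (m : ℕ) : List Bool → Prop
  | short {u : List Bool} (hu : u.length = m + 1) : IsLeaf m (shortLeaf u)
  | middle {a u : List Bool} (hu : u.length = m + 1) (ha : a.length = m) :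
      IsLeaf m (middleLeaf a u)
  | long {c a u : List Bool} (hu : u.length = m + 1) (ha : a.length = m)
      (hc : c.length = m + 1) : IsLeaf m (longLeaf c a u)

variable {m : ℕ} {a c u L : List Bool}

lemma mem_shortLeaves : L ∈ shortLeaves m ↔ ∃ u, u.length = m + 1 ∧ shortLeaf u = L := by
  simp only [shortLeaves, Finset.mem_image, mem_words]

lemma mem_middleLeaves : L ∈ middleLeaves m u ↔ ∃ a, a.length = m ∧ middleLeaf a u = L := by
  simp only [middleLeaves, Finset.mem_image, mem_words]

lemma mem_longLeaves : L ∈ longLeaves m a u ↔ ∃ c, c.length = m + 1 ∧ longLeaf c a u = L := by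
  simp only [longLeaves, Finset.mem_image, mem_words]

lemma mem_leaves : L ∈ leaves m ↔ IsLeaf m L := by
  simp only [leaves, Finset.mem_union, Finset.mem_biUnion, mem_words, mem_shortLeaves,
    mem_middleLeaves, mem_longLeaves]
  constructor
  · rintro (⟨u, hu, rfl⟩ | ⟨u, hu, ⟨a, ha, rfl⟩ | ⟨a, ha, c, hc, rfl⟩⟩)
    exacts [.short hu, .middle hu ha, .long hu ha hc]
  · rintro (hu | ⟨hu, ha⟩ | ⟨hu, ha, hc⟩)
    exacts [.inl ⟨_, hu, rfl⟩, .inr ⟨_, hu, .inl ⟨_, ha, rfl⟩⟩,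
      .inr ⟨_, hu, .inr ⟨_, ha, _, hc, rfl⟩⟩]

lemma card_shortLeaves : (shortLeaves m).card = 2 ^ (m + 1) := by
  rw [shortLeaves, Finset.card_image_of_injective, card_words, Fintype.card_bool]
  exact List.cons_injective

lemma card_middleLeaves : (middleLeaves m u).card = 2 ^ m := by
  rw [middleLeaves, Finset.card_image_of_injective, card_words, Fintype.card_bool]
  exact List.cons_injective.comp (List.append_left_injective _)

lemma card_longLeaves : (longLeaves m a u).card = 2 ^ (m + 1) := by
  rw [longLeaves, Finset.card_image_of_injective, card_words, Fintype.card_bool]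
  exact List.append_left_injective _

lemma length_shortLeaf (hu : u.length = m + 1) : (shortLeaf u).length = m + 2 := by
  simp [shortLeaf, hu]

lemma length_middleLeaf (hu : u.length = m + 1) (ha : a.length = m) :
    (middleLeaf a u).length = 2 * m + 3 := by
  simp only [middleLeaf, List.length_cons, List.length_append, hu, ha]
  lia

lemma length_longLeaf (hu : u.length = m + 1) (ha : a.length = m) :
    (longLeaf c a u).length = c.length + 2 * m + 3 := by
  simp only [longLeaf, List.length_cons, List.length_append, hu, ha]
  lia

lemma IsLeaf.le_length (h : IsLeaf m L) : m + 2 ≤ L.length := by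
  cases h with
  | short hu => rw [length_shortLeaf hu]
  | middle hu ha => rw [length_middleLeaf hu ha]; lia
  | long hu ha => rw [length_longLeaf hu ha]; lia

lemma disjoint_middleLeaves_longLeaves (hu : u.length = m + 1) (ha : a.length = m) :
    Disjoint (middleLeaves m u) (longLeaves m a u) := by
  simp only [Finset.disjoint_left, mem_middleLeaves, mem_longLeaves]
  rintro _ ⟨a', ha', rfl⟩ ⟨c, hc, h⟩
  have hlen := congrArg List.length h
  rw [length_longLeaf hu ha, length_middleLeaf hu ha'] at hlen
  lia

lemma shortLeaf_notMem_middleLeaves (hu : u.length = m + 1) :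
    shortLeaf u ∉ middleLeaves m u := by
  rw [mem_middleLeaves]
  rintro ⟨a, ha, h⟩
  have hlen := congrArg List.length h
  rw [length_middleLeaf hu ha, length_shortLeaf hu] at hlen
  lia

lemma shortLeaf_notMem_longLeaves (hu : u.length = m + 1) (ha : a.length = m) :
    shortLeaf u ∉ longLeaves m a u := by
  rw [mem_longLeaves]
  rintro ⟨c, -, h⟩
  have hlen := congrArg List.length h
  rw [length_longLeaf hu ha, length_shortLeaf hu] at hlen
  lia

lemma suffix_middleLeaf : u <:+ middleLeaf a u := ⟨true :: (a ++ [false]), by simp [middleLeaf]⟩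

lemma suffix_longLeaf : a ++ false :: u <:+ longLeaf c a u := ⟨c ++ [false], by simp [longLeaf]⟩

end Leaves

section Intersections

variable {m : ℕ} {a a' c c' u u' : List Bool}

lemma shortLeaf_inter_shortLeaf (hu : u.length = m + 1) (hu' : u'.length = m + 1) :
    (pathEdge (m + 3) (shortLeaf u) ∩ pathEdge (m + 3) (shortLeaf u')).Nonempty := by
  rw [pathEdge_inter_nonempty_iff List.nil_suffix (by simp [length_shortLeaf hu])
    (by simp [shortLeaf, *])]
  exact List.nil_suffix

lemma middleLeaf_inter_nonempty_iff (hu : u.length = m + 1) (ha : a.length = m) {L : List Bool}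
    (hL : L.length ≤ 2 * m + 3) :
    (pathEdge (m + 3) (middleLeaf a u) ∩ pathEdge (m + 3) L).Nonempty ↔ u <:+ L := by
  have hlen := length_middleLeaf hu ha
  exact pathEdge_inter_nonempty_iff suffix_middleLeaf (by lia) (by lia)

lemma longLeaf_inter_nonempty_iff (hu : u.length = m + 1) (ha : a.length = m)
    (hc : c.length = m + 1) {L : List Bool} (hL : L.length ≤ 3 * m + 4) :
    (pathEdge (m + 3) (longLeaf c a u) ∩ pathEdge (m + 3) L).Nonempty ↔ a ++ false :: u <:+ L := by
  have hlen := length_longLeaf (c := c) hu ha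
  exact pathEdge_inter_nonempty_iff suffix_longLeaf
    (by simp only [List.length_append, List.length_cons]; lia) (by lia)

lemma middleLeaf_inter_shortLeaf (hu : u.length = m + 1) (ha : a.length = m)
    (hu' : u'.length = m + 1) :
    (pathEdge (m + 3) (middleLeaf a u) ∩ pathEdge (m + 3) (shortLeaf u')).Nonempty ↔ u = u' := by
  rw [middleLeaf_inter_nonempty_iff hu ha (by rw [length_shortLeaf hu']; lia)]
  exact suffix_append_iff_of_length_eq (s := [true]) (hu.trans hu'.symm)

lemma middleLeaf_inter_middleLeaf (hu : u.length = m + 1) (ha : a.length = m)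
    (hu' : u'.length = m + 1) (ha' : a'.length = m) :
    (pathEdge (m + 3) (middleLeaf a u) ∩ pathEdge (m + 3) (middleLeaf a' u')).Nonempty ↔
      u = u' := by
  rw [middleLeaf_inter_nonempty_iff hu ha (length_middleLeaf hu' ha').le]
  simpa [middleLeaf] using
    suffix_append_iff_of_length_eq (s := true :: a' ++ [false]) (hu.trans hu'.symm)

lemma longLeaf_inter_shortLeaf (hu : u.length = m + 1) (ha : a.length = m)
    (hc : c.length = m + 1) (hu' : u'.length = m + 1) :
    ¬ (pathEdge (m + 3) (longLeaf c a u) ∩ pathEdge (m + 3) (shortLeaf u')).Nonempty := by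
  rw [longLeaf_inter_nonempty_iff hu ha hc (by rw [length_shortLeaf hu']; lia)]
  intro h
  have heq : false :: u = true :: u' :=
    ((List.suffix_append a _).trans h).eq_of_length (by simp [shortLeaf, hu, hu'])
  simp at heq

lemma longLeaf_inter_middleLeaf (hu : u.length = m + 1) (ha : a.length = m)
    (hc : c.length = m + 1) (hu' : u'.length = m + 1) (ha' : a'.length = m) :
    (pathEdge (m + 3) (longLeaf c a u) ∩ pathEdge (m + 3) (middleLeaf a' u')).Nonempty ↔
      a = a' ∧ u = u' := by
  rw [longLeaf_inter_nonempty_iff hu ha hc (by rw [length_middleLeaf hu' ha']; lia),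
    ← append_cons_inj_of_length_eq (hu.trans hu'.symm)]
  exact suffix_append_iff_of_length_eq (s := [true]) (by simp [*])

lemma longLeaf_inter_longLeaf (hu : u.length = m + 1) (ha : a.length = m)
    (hc : c.length = m + 1) (hu' : u'.length = m + 1) (ha' : a'.length = m)
    (hc' : c'.length = m + 1) :
    (pathEdge (m + 3) (longLeaf c a u) ∩ pathEdge (m + 3) (longLeaf c' a' u')).Nonempty ↔
      a = a' ∧ u = u' := by
  rw [longLeaf_inter_nonempty_iff hu ha hc (by rw [length_longLeaf hu' ha']; lia),
    ← append_cons_inj_of_length_eq (hu.trans hu'.symm)]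
  simpa [longLeaf] using
    suffix_append_iff_of_length_eq (s := c' ++ [false]) (x := a ++ false :: u) (by simp [*])

/-- The leaves whose edge meets that of `L`. These include `L` itself when `L` is a leaf. -/
def leavesMeeting (m : ℕ) (L : List Bool) : Finset (List Bool) :=
  {L' ∈ leaves m | (pathEdge (m + 3) L ∩ pathEdge (m + 3) L').Nonempty}

lemma mem_leavesMeeting {L L' : List Bool} : L' ∈ leavesMeeting m L ↔
    IsLeaf m L' ∧ (pathEdge (m + 3) L ∩ pathEdge (m + 3) L').Nonempty := by
  rw [leavesMeeting, Finset.mem_filter, mem_leaves]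

lemma leavesMeeting_shortLeaf (hu : u.length = m + 1) :
    leavesMeeting m (shortLeaf u) = shortLeaves m ∪ middleLeaves m u := by
  ext L
  rw [mem_leavesMeeting, Finset.mem_union, mem_shortLeaves, mem_middleLeaves]
  constructor
  · rintro ⟨hu' | ⟨hu', ha'⟩ | ⟨hu', ha', hc'⟩, hmeet⟩
    · exact Or.inl ⟨_, hu', rfl⟩
    · rw [Finset.inter_comm, middleLeaf_inter_shortLeaf hu' ha' hu] at hmeet
      exact Or.inr ⟨_, ha', hmeet ▸ rfl⟩
    · rw [Finset.inter_comm] at hmeet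
      exact (longLeaf_inter_shortLeaf hu' ha' hc' hu hmeet).elim
  · rintro (⟨u', hu', rfl⟩ | ⟨a, ha, rfl⟩)
    · exact ⟨.short hu', shortLeaf_inter_shortLeaf hu hu'⟩
    · rw [Finset.inter_comm]
      exact ⟨.middle hu ha, (middleLeaf_inter_shortLeaf hu ha hu).2 rfl⟩

lemma leavesMeeting_middleLeaf (hu : u.length = m + 1) (ha : a.length = m) :
    leavesMeeting m (middleLeaf a u)
      = insert (shortLeaf u) (middleLeaves m u ∪ longLeaves m a u) := by
  ext L
  rw [mem_leavesMeeting, Finset.mem_insert, Finset.mem_union, mem_middleLeaves, mem_longLeaves]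
  constructor
  · rintro ⟨hu' | ⟨hu', ha'⟩ | ⟨hu', ha', hc'⟩, hmeet⟩
    · rw [middleLeaf_inter_shortLeaf hu ha hu'] at hmeet
      exact Or.inl (hmeet ▸ rfl)
    · rw [middleLeaf_inter_middleLeaf hu ha hu' ha'] at hmeet
      exact Or.inr (Or.inl ⟨_, ha', hmeet ▸ rfl⟩)
    · rw [Finset.inter_comm, longLeaf_inter_middleLeaf hu' ha' hc' hu ha] at hmeet
      obtain ⟨rfl, rfl⟩ := hmeet
      exact Or.inr (Or.inr ⟨_, hc', rfl⟩)
  · rintro (rfl | ⟨a', ha', rfl⟩ | ⟨c, hc, rfl⟩)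
    · exact ⟨.short hu, (middleLeaf_inter_shortLeaf hu ha hu).2 rfl⟩
    · exact ⟨.middle hu ha', (middleLeaf_inter_middleLeaf hu ha hu ha').2 rfl⟩
    · rw [Finset.inter_comm]
      exact ⟨.long hu ha hc, (longLeaf_inter_middleLeaf hu ha hc hu ha).2 ⟨rfl, rfl⟩⟩

lemma leavesMeeting_longLeaf (hu : u.length = m + 1) (ha : a.length = m) (hc : c.length = m + 1) :
    leavesMeeting m (longLeaf c a u) = insert (middleLeaf a u) (longLeaves m a u) := by
  ext L
  rw [mem_leavesMeeting, Finset.mem_insert, mem_longLeaves]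
  constructor
  · rintro ⟨hu' | ⟨hu', ha'⟩ | ⟨hu', ha', hc'⟩, hmeet⟩
    · exact (longLeaf_inter_shortLeaf hu ha hc hu' hmeet).elim
    · obtain ⟨rfl, rfl⟩ := (longLeaf_inter_middleLeaf hu ha hc hu' ha').1 hmeet
      exact Or.inl rfl
    · obtain ⟨rfl, rfl⟩ := (longLeaf_inter_longLeaf hu ha hc hu' ha' hc').1 hmeet
      exact Or.inr ⟨_, hc', rfl⟩
  · rintro (rfl | ⟨c', hc', rfl⟩)
    · exact ⟨.middle hu ha, (longLeaf_inter_middleLeaf hu ha hc hu ha).2 ⟨rfl, rfl⟩⟩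
    · exact ⟨.long hu ha hc', (longLeaf_inter_longLeaf hu ha hc hu ha hc').2 ⟨rfl, rfl⟩⟩

lemma card_leavesMeeting_middleLeaf (hu : u.length = m + 1) (ha : a.length = m) :
    (leavesMeeting m (middleLeaf a u)).card = 2 ^ (m + 1) + 2 ^ m + 1 := by
  rw [leavesMeeting_middleLeaf hu ha, Finset.card_insert_of_notMem,
    Finset.card_union_of_disjoint (disjoint_middleLeaves_longLeaves hu ha), card_middleLeaves,
    card_longLeaves, add_comm (2 ^ m)]
  rw [Finset.mem_union, not_or]
  exact ⟨shortLeaf_notMem_middleLeaves hu, shortLeaf_notMem_longLeaves hu ha⟩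

lemma card_leavesMeeting_le {L : List Bool} (hL : IsLeaf m L) :
    (leavesMeeting m L).card ≤ 2 ^ (m + 1) + 2 ^ m + 1 := by
  cases hL with
  | @short u hu =>
    rw [leavesMeeting_shortLeaf hu, ← card_shortLeaves, ← card_middleLeaves (u := u)]
    exact (Finset.card_union_le _ _).trans (Nat.le_succ _)
  | middle hu ha => exact (card_leavesMeeting_middleLeaf hu ha).le
  | @long c a u hu ha hc =>
    rw [leavesMeeting_longLeaf hu ha hc]
    refine (Finset.card_insert_le _ _).trans ?_
    rw [card_longLeaves]
    lia

end Intersections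

section TreeHypergraph

variable {m : ℕ}

/-- The `(m + 3)`-uniform hypergraph whose edges end at the leaves of the tree. -/
def treeHypergraph (m : ℕ) : Finset (Finset (List Bool)) := (leaves m).image (pathEdge (m + 3))

lemma mem_treeHypergraph {e : Finset (List Bool)} :
    e ∈ treeHypergraph m ↔ ∃ L, IsLeaf m L ∧ pathEdge (m + 3) L = e := by
  simp only [treeHypergraph, Finset.mem_image, mem_leaves]

lemma card_of_mem_treeHypergraph {e : Finset (List Bool)} (he : e ∈ treeHypergraph m) :
    e.card = m + 3 := by
  obtain ⟨L, hL, rfl⟩ := mem_treeHypergraph.1 he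
  exact card_pathEdge (Nat.succ_le_succ hL.le_length)

lemma card_neighborhood_add_one {L : List Bool} (hL : IsLeaf m L) :
    (neighborhood (treeHypergraph m) (pathEdge (m + 3) L)).card + 1 = (leavesMeeting m L).card :=
  card_neighborhood_image_add_one (pathEdge_injective (by lia)) (mem_leaves.2 hL)
    ⟨L, self_mem_pathEdge (by lia) L⟩

lemma card_neighborhood_le {e : Finset (List Bool)} (he : e ∈ treeHypergraph m) :
    (neighborhood (treeHypergraph m) e).card ≤ 2 ^ (m + 1) + 2 ^ m := by
  obtain ⟨L, hL, rfl⟩ := mem_treeHypergraph.1 he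
  have hcard := card_neighborhood_add_one hL
  have hle := card_leavesMeeting_le hL
  lia

lemma exists_card_neighborhood_eq (m : ℕ) :
    ∃ e ∈ treeHypergraph m, (neighborhood (treeHypergraph m) e).card = 2 ^ (m + 1) + 2 ^ m := by
  have hu : (List.replicate (m + 1) true).length = m + 1 := List.length_replicate
  have ha : (List.replicate m true).length = m := List.length_replicate
  refine ⟨_, mem_treeHypergraph.2 ⟨_, .middle hu ha, rfl⟩, ?_⟩
  have hcard := card_neighborhood_add_one (.middle hu ha)
  rw [card_leavesMeeting_middleLeaf hu ha] at hcard
  exact Nat.succ_injective hcard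

/-- The nodes of the tree, as an inductive predicate; the constructors `bottom`, `middle` and `top`
run through the three layers of full binary trees. -/
inductive IsNode (m : ℕ) : List Bool → Prop
  | bottom {p : List Bool} (hp : p.length ≤ m + 1) : IsNode m p
  | middle {a u : List Bool} (hu : u.length = m + 1) (ha : a.length ≤ m) :
      IsNode m (a ++ false :: u)
  | top {c a u : List Bool} (hu : u.length = m + 1) (ha : a.length = m) (hc : c.length ≤ m + 1) :
      IsNode m (longLeaf c a u)
  | leaf {L : List Bool} (hL : IsLeaf m L) : IsNode m L

lemma IsNode.isLeaf_or_forall_cons {p : List Bool} (hp : IsNode m p) :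
    IsLeaf m p ∨ ∀ b, IsNode m (b :: p) := by
  cases hp with
  | bottom hp =>
    refine Or.inr fun b => ?_
    rcases hp.lt_or_eq with hlt | heq
    · exact .bottom hlt
    · cases b with
      | false => exact .middle (a := []) heq (Nat.zero_le _)
      | true => exact .leaf (.short heq)
  | middle hu ha =>
    refine Or.inr fun b => ?_
    rcases ha.lt_or_eq with hlt | heq
    · exact .middle (a := b :: _) hu hlt
    · cases b with
      | false => exact .top (c := []) hu heq (Nat.zero_le _)
      | true => exact .leaf (.middle hu heq)
  | top hu ha hc =>
    rcases hc.lt_or_eq with hlt | heq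
    · exact Or.inr fun b => .top (c := b :: _) hu ha hlt
    · exact Or.inl (.long hu ha heq)
  | leaf hL => exact Or.inl hL

lemma IsNode.exists_isLeaf {p : List Bool} (hp : IsNode m p) :
    ∃ L, IsLeaf m L ∧ p ∈ pathEdge (m + 3) L := by
  simp only [mem_pathEdge]
  cases hp with
  | bottom hp =>
    obtain ⟨u, hu, hpu⟩ := exists_suffix_length_eq hp
    refine ⟨_, .short hu, hpu.trans (List.suffix_cons true u), ?_⟩
    rw [length_shortLeaf hu]
    lia
  | @middle a u hu ha =>
    obtain ⟨_, ha', s, rfl⟩ := exists_suffix_length_eq ha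
    refine ⟨_, .middle hu ha', ⟨true :: s, by simp [middleLeaf]⟩, ?_⟩
    rw [length_middleLeaf hu ha', List.length_append, List.length_cons]
    lia
  | @top c a u hu ha hc =>
    obtain ⟨_, hc', s, rfl⟩ := exists_suffix_length_eq hc
    refine ⟨_, .long hu ha hc', ⟨s, by simp [longLeaf]⟩, ?_⟩
    rw [length_longLeaf hu ha, length_longLeaf hu ha]
    lia
  | leaf hL => exact ⟨p, hL, List.suffix_rfl, by lia⟩

lemma makerWins_treeHypergraph (m : ℕ) :
    MakerWins (treeHypergraph m) ((treeHypergraph m).biUnion id) := by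
  refine makerWins_of_branching (T := {p | IsNode m p}) (.bottom (Nat.zero_le _)) ?_ ?_
  · intro p hp
    obtain ⟨L, hL, hpL⟩ := hp.exists_isLeaf
    exact Finset.mem_biUnion.2 ⟨_, mem_treeHypergraph.2 ⟨L, hL, rfl⟩, hpL⟩
  · intro p hp
    refine hp.isLeaf_or_forall_cons.imp_left fun hL => ?_
    exact ⟨_, mem_treeHypergraph.2 ⟨p, hL, rfl⟩, fun x hx => (mem_pathEdge.1 hx).1⟩

end TreeHypergraph

end NeighborhoodConjecture

/-- Disproof of the Neighborhood Conjecture: there is an `n`-uniform hypergraph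
with maximum neighborhood size `2^(n-2) + 2^(n-3)` on which Maker has a winning
strategy. -/
theorem neighborhood_conjecture_false (n : ℕ) (hn : 3 ≤ n) :
    ∃ E : Finset (Finset (List Bool)),
      (∀ e ∈ E, e.card = n) ∧
      (∀ e ∈ E, ((E.filter fun f => f ≠ e ∧ (e ∩ f).Nonempty).card)
          ≤ 2 ^ (n - 2) + 2 ^ (n - 3)) ∧
      (∃ e ∈ E, ((E.filter fun f => f ≠ e ∧ (e ∩ f).Nonempty).card)
          = 2 ^ (n - 2) + 2 ^ (n - 3)) ∧
      MakerWins E (E.biUnion id) := by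
  obtain ⟨m, rfl⟩ : ∃ m, n = m + 3 := ⟨n - 3, by lia⟩
  exact ⟨NeighborhoodConjecture.treeHypergraph m,
    fun _ => NeighborhoodConjecture.card_of_mem_treeHypergraph,
    fun _ => NeighborhoodConjecture.card_neighborhood_le,
    NeighborhoodConjecture.exists_card_neighborhood_eq m,
    NeighborhoodConjecture.makerWins_treeHypergraph m⟩
end

section
/- There exists an n-uniform hypergraph H with maximum vertex degree at most 2^(n-1)/n on which Maker has a winning strategy in the Maker–Breaker game. -/
/-!
On the infinite rooted binary tree Maker can pair siblings and so own all the vertices of a path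
from the root to a leaf, for every finite full subtree. Taking as edges the last `n` vertices of
these paths, we need a tree all of whose leaves have depth at least `n` and in which every vertex
has at most `d = 2 ^ (n - 1) / n` leaves among its descendants at distance less than `n`.

Following Gebauer, and Gebauer, Szabó and Tardos, we grow the tree from the root and record for
each vertex how many leaves it may have at each distance `j < n`. A budget with Kraft sum at least
`1` can be completed to a tree. Splitting a budget evenly between the children, each of which gains
`d / 2` leaves at distance `n - 1`, brings the Kraft sum only to about `1 / 2`. But whenever the
nearest levels have Kraft sum `1 / 4`, all of them can be given to one of the four grandchildren,
whose tree can then be completed; the other three share the remaining levels, whose weights get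
multiplied by `4 / 3`. After boundedly many such cuts the Kraft sum exceeds `1`.
-/

namespace MakerBreaker

open Finset

section Pairing

lemma exists_mem_eq_of_mem {α : Type*} {s : Finset α} (hs : s.Nonempty) (a : α) :
    ∃ b ∈ s, a ∈ s → b = a := by
  by_cases ha : a ∈ s
  · exact ⟨a, ha, fun _ => rfl⟩
  · exact hs.imp fun b hb => ⟨hb, fun h => absurd h ha⟩

variable {V : Type} [DecidableEq V] {σ : V → V} {E : Finset (Finset V)} {M U R B : Finset V}
  {p v w : V}

/-- The invariant of Maker's pairing strategy (answer Breaker's move `w` by `σ w`) when Maker is to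
move: `U` is the set of unclaimed vertices, `R` the set of Breaker's vertices, and `p` the reply
that Maker owes. Maker moves freely when `p` is already claimed; a fixed point of `σ` can only be
the vertex at which Maker opens the game. -/
structure PairingInvariant (σ : V → V) (U R : Finset V) (p : V) : Prop where
  partner_notMem : ∀ v ∈ R, σ v ∉ R
  eq_of_partner_mem : ∀ v ∈ R, σ v ∈ U → σ v = p
  eq_of_isFixedPt : ∀ v ∈ U, σ v = v → v = p

lemma PairingInvariant.round (h : PairingInvariant σ U R p) (hσ : σ.Involutive)
    (hv : p ∈ U → v = p) (hw : w ∈ U.erase v) :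
    PairingInvariant σ ((U.erase v).erase w) (insert w R) (σ w) := by
  have partner_claimed : ∀ u ∈ R, σ u ∉ U.erase v := fun u hu hmem => by
    obtain ⟨hne, hU⟩ := mem_erase.1 hmem
    have := h.eq_of_partner_mem u hu hU
    exact hne (this.trans (hv (this ▸ hU)).symm)
  have not_fixed : ∀ u ∈ U.erase v, σ u ≠ u := fun u hu hfix => by
    obtain ⟨hne, hU⟩ := mem_erase.1 hu
    have := h.eq_of_isFixedPt u hU hfix
    exact hne (this.trans (hv (this ▸ hU)).symm)
  refine ⟨fun u hu => ?_, fun u hu hmem => ?_, fun u hu hfix => ?_⟩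
  · rw [mem_insert, not_or]
    rcases mem_insert.1 hu with rfl | hu
    · exact ⟨not_fixed u hw, fun hR => partner_claimed _ hR ((hσ u).symm ▸ hw)⟩
    · exact ⟨fun huw => partner_claimed u hu (huw ▸ hw), h.partner_notMem u hu⟩
  · rcases mem_insert.1 hu with rfl | hu
    · rfl
    · exact absurd (mem_of_mem_erase hmem) (partner_claimed u hu)
  · exact absurd hfix (not_fixed u (mem_of_mem_erase hu))

lemma makerWinsAux_of_pairing (hσ : σ.Involutive)
    (hE : ∀ S : Finset V, (∀ v ∈ S, σ v ∉ S) → ∃ e ∈ E, Disjoint e S) {k : ℕ} (hk : #U ≤ k)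
    (hboard : ∀ e ∈ E, Disjoint e R → e ⊆ M ∪ U) (h : PairingInvariant σ U R p) :
    MakerWinsAux E k M U := by
  induction k generalizing M U R p with
  | zero =>
    obtain ⟨e, he, heR⟩ := hE R h.partner_notMem
    obtain rfl : U = ∅ := by simpa using hk
    exact ⟨e, he, by simpa using hboard e he heR⟩
  | succ k ih =>
    obtain ⟨e, he, heR⟩ := hE R h.partner_notMem
    rcases U.eq_empty_or_nonempty with rfl | hU
    · exact .inl ⟨e, he, by simpa using hboard e he heR⟩
    obtain ⟨v, hvU, hvp⟩ := exists_mem_eq_of_mem hU p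
    have hsplit : M ∪ U = insert v M ∪ U.erase v := by
      rw [insert_union_comm, insert_erase hvU]
    refine .inr ⟨v, hvU, ?_⟩
    rcases (U.erase v).eq_empty_or_nonempty with hlast | hne
    · exact .inl ⟨e, he, by simpa [hsplit, hlast] using hboard e he heR⟩
    refine .inr ⟨hne, fun w hw => ih (R := insert w R) ?_ ?_ (h.round hσ hvp hw)⟩
    · rw [card_erase_of_mem hw, card_erase_of_mem hvU]
      omega
    · intro f hf hfR a ha
      rw [disjoint_insert_right] at hfR
      have haw : a ≠ w := fun haw => hfR.1 (haw ▸ ha)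
      have := hboard f hf hfR.2 ha
      rw [hsplit] at this
      simpa [haw] using this

/-- **Pairing strategy**: Breaker's final set contains no pair `v`, `σ v`. -/
theorem makerWins_of_pairing (hσ : σ.Involutive) (hfix : ∀ v ∈ B, σ v = v → v = p)
    (hB : ∀ e ∈ E, e ⊆ B)
    (hE : ∀ S : Finset V, (∀ v ∈ S, σ v ∉ S) → ∃ e ∈ E, Disjoint e S) : MakerWins E B :=
  makerWinsAux_of_pairing (R := ∅) hσ hE le_rfl (fun e he _ => by simpa using hB e he)
    ⟨by simp, by simp, hfix⟩

end Pairing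

section TreeHypergraph

/-- The leaves of the full binary tree `t` with root address `p`. A vertex of the infinite binary
tree is addressed by the list of turns leading to it, the last turn first, so that ancestors are
suffixes. `BinaryTree.nil` stands for a leaf. -/
def leaves : BinaryTree Unit → List Bool → Finset (List Bool)
  | .nil, p => {p}
  | .node _ l r, p => leaves l (true :: p) ∪ leaves r (false :: p)

/-- The number of leaves of `t` at depth `j`. -/
def leafCount : BinaryTree Unit → ℕ → ℕ
  | .nil, 0 => 1
  | .nil, _ + 1 => 0
  | .node _ _ _, 0 => 0
  | .node _ l r, j + 1 => leafCount l j + leafCount r j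

/-- Every internal vertex of `t` has at most `d` leaves among its descendants at distance less
than `n`. -/
def LeafBounded (n d : ℕ) : BinaryTree Unit → Prop
  | .nil => True
  | .node _ l r => LeafBounded n d l ∧ LeafBounded n d r ∧
      ∑ j ∈ range n, leafCount (.node () l r) j ≤ d

variable {n d : ℕ} {t : BinaryTree Unit} {p q v : List Bool}

lemma suffix_of_mem_leaves (hq : q ∈ leaves t p) : p <:+ q := by
  induction t generalizing p with
  | nil => exact (mem_singleton.1 hq).symm ▸ List.suffix_rfl
  | node _ l r ihl ihr =>
    rcases mem_union.1 hq with hq | hq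
    · exact (List.suffix_cons _ _).trans (ihl hq)
    · exact (List.suffix_cons _ _).trans (ihr hq)

lemma card_filter_length_lt_leaves (t : BinaryTree Unit) (n : ℕ) (p : List Bool) :
    #{q ∈ leaves t p | q.length < p.length + n} ≤ ∑ j ∈ range n, leafCount t j := by
  induction t generalizing n p with
  | nil => cases n <;> simp [leaves, leafCount, sum_range_succ', filter_singleton]
  | node _ l r ihl ihr =>
    cases n with
    | zero =>
      rw [add_zero, filter_false_of_mem fun q hq => (suffix_of_mem_leaves hq).length_le.not_gt]
      simp
    | succ n =>
      have hlen (b : Bool) : p.length + (n + 1) = (b :: p).length + n := by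
        simp only [List.length_cons]
        omega
      rw [sum_range_succ', leaves, filter_union]
      simp only [leafCount, sum_add_distrib, add_zero]
      refine (card_union_le _ _).trans (add_le_add ?_ ?_)
      · simpa only [hlen true] using ihl n (true :: p)
      · simpa only [hlen false] using ihr n (false :: p)

lemma LeafBounded.card_filter_leaves_le (h : LeafBounded n d t) (hd : 1 ≤ d)
    (hpv : p.length ≤ v.length) :
    #{q ∈ leaves t p | v <:+ q ∧ q.length < v.length + n} ≤ d := by
  induction t generalizing p with
  | nil => exact (card_filter_le _ _).trans (by simpa [leaves] using hd)
  | node _ l r ihl ihr =>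
    obtain ⟨hl, hr, hroot⟩ := h
    rcases hpv.eq_or_lt with hpv | hpv
    · refine (card_le_card fun q hq => ?_).trans
        ((card_filter_length_lt_leaves (.node () l r) n p).trans hroot)
      rw [mem_filter] at hq ⊢
      exact ⟨hq.1, hpv ▸ hq.2.2⟩
    have off_path (b : Bool) (t : BinaryTree Unit) (hb : ¬ (b :: p) <:+ v) :
        {q ∈ leaves t (b :: p) | v <:+ q ∧ q.length < v.length + n} = ∅ :=
      filter_false_of_mem fun _ hq hvq =>
        hb (List.suffix_of_suffix_length_le (suffix_of_mem_leaves hq) hvq.1 hpv)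
    rw [leaves, filter_union]
    by_cases htrue : (true :: p) <:+ v
    · have hfalse : ¬ (false :: p) <:+ v := fun hfalse => by
        simpa using (List.suffix_of_suffix_length_le htrue hfalse le_rfl).eq_of_length rfl
      rw [off_path false r hfalse, union_empty]
      exact ihl hl hpv
    · rw [off_path true l htrue, empty_union]
      exact ihr hr hpv

/-- The other child of the parent; the root `[]` is fixed. -/
def sibling : List Bool → List Bool :=
  List.modifyHead not

lemma sibling_involutive : sibling.Involutive := fun v => by
  cases v <;> simp [sibling]

lemma eq_nil_of_sibling_eq (h : sibling v = v) : v = [] := by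
  cases v <;> simp_all [sibling]

lemma exists_leaf_avoiding {S : Finset (List Bool)} (hS : ∀ v ∈ S, sibling v ∉ S)
    (t : BinaryTree Unit) (hp : ∀ v, v <:+ p → v ∉ S) :
    ∃ q ∈ leaves t p, ∀ v, v <:+ q → v ∉ S := by
  induction t generalizing p with
  | nil => exact ⟨p, mem_singleton_self p, hp⟩
  | node _ l r ihl ihr =>
    have extend (b : Bool) (hb : b :: p ∉ S) (v : List Bool) (hv : v <:+ b :: p) : v ∉ S :=
      (List.suffix_cons_iff.1 hv).elim (· ▸ hb) (hp v)
    by_cases htrue : true :: p ∈ S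
    · obtain ⟨q, hq, hav⟩ := ihr (extend false (hS _ htrue))
      exact ⟨q, mem_union_right _ hq, hav⟩
    · obtain ⟨q, hq, hav⟩ := ihl (extend true htrue)
      exact ⟨q, mem_union_left _ hq, hav⟩

/-- The last `n` vertices of the path from the root to `q`. -/
def pathEdge (n : ℕ) (q : List Bool) : Finset (List Bool) :=
  (range n).image q.drop

lemma card_pathEdge (h : n ≤ q.length) : #(pathEdge n q) = n := by
  rw [pathEdge, card_image_of_injOn, card_range]
  intro i hi j hj hij
  rw [mem_coe, mem_range] at hi hj
  have := congrArg List.length hij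
  simp only [List.length_drop] at this
  omega

lemma suffix_of_mem_pathEdge (h : v ∈ pathEdge n q) : v <:+ q := by
  obtain ⟨i, -, rfl⟩ := mem_image.1 h
  exact List.drop_suffix i q

lemma length_lt_of_mem_pathEdge (h : v ∈ pathEdge n q) : q.length < v.length + n := by
  obtain ⟨i, hi, rfl⟩ := mem_image.1 h
  have := mem_range.1 hi
  rw [List.length_drop]
  omega

/-- The hypergraph of a tree: its edges end at the leaves. -/
def treeHypergraph (n : ℕ) (t : BinaryTree Unit) : Finset (Finset (List Bool)) :=
  (leaves t []).image (pathEdge n)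

theorem makerWins_treeHypergraph (n : ℕ) (t : BinaryTree Unit) :
    MakerWins (treeHypergraph n t) ((treeHypergraph n t).biUnion id) := by
  refine makerWins_of_pairing sibling_involutive (fun v _ => eq_nil_of_sibling_eq)
    (fun e he => subset_biUnion_of_mem id he) fun S hS => ?_
  have hroot : [] ∉ S := fun h => hS [] h h
  obtain ⟨q, hq, hav⟩ := exists_leaf_avoiding hS t (p := [])
    fun v hv => (List.suffix_nil.1 hv).symm ▸ hroot
  exact ⟨pathEdge n q, mem_image_of_mem _ hq,
    disjoint_left.2 fun v hv => hav v (suffix_of_mem_pathEdge hv)⟩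

lemma card_of_mem_treeHypergraph (hlong : ∀ q ∈ leaves t [], n ≤ q.length) :
    ∀ e ∈ treeHypergraph n t, #e = n :=
  forall_mem_image.2 fun q hq => card_pathEdge (hlong q hq)

lemma LeafBounded.degree_treeHypergraph_le (h : LeafBounded n d t) (hd : 1 ≤ d)
    (v : List Bool) : #{e ∈ treeHypergraph n t | v ∈ e} ≤ d := by
  rw [treeHypergraph, filter_image]
  refine card_image_le.trans ((card_le_card fun q hq => ?_).trans
    (h.card_filter_leaves_le hd (p := []) (v := v) (Nat.zero_le _)))
  rw [mem_filter] at hq ⊢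
  exact ⟨hq.1, suffix_of_mem_pathEdge hq.2, length_lt_of_mem_pathEdge hq.2⟩

lemma le_length_of_leafCount_eq_zero (h : ∀ j < n, leafCount t j = 0) (hq : q ∈ leaves t []) :
    n ≤ q.length := by
  have hcard : #{q ∈ leaves t [] | q.length < n} = 0 := by
    simpa [sum_eq_zero fun j hj => h j (mem_range.1 hj)] using
      card_filter_length_lt_leaves t n []
  exact not_lt.1 (filter_eq_empty_iff.1 (card_eq_zero.1 hcard) hq)

end TreeHypergraph

section Constructible

variable {n d : ℕ} {x y z : ℕ → ℕ}

/-- The entries of `x` add up to at most `d`. -/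
def TotalLE (d : ℕ) (x : ℕ → ℕ) : Prop :=
  ∀ N, ∑ j ∈ range N, x j ≤ d

lemma TotalLE.mono (hx : TotalLE d x) (hyx : y ≤ x) : TotalLE d y := fun N =>
  (sum_le_sum fun j _ => hyx j).trans (hx N)

lemma TotalLE.shift (hx : TotalLE d x) (r : ℕ) : TotalLE d fun j => x (j + r) := fun N => by
  refine le_trans ?_ (hx (r + N))
  rw [sum_range_add]
  simp only [add_comm r]
  exact Nat.le_add_left _ _

lemma TotalLE.halve_add_single (hx : TotalLE d x) (i : ℕ) :
    TotalLE d fun j => x (j + 1) / 2 + (Pi.single i (d / 2) : ℕ → ℕ) j := fun N => by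
  have hhalf : (∑ j ∈ range N, x (j + 1) / 2) * 2 ≤ d := by
    rw [sum_mul]
    exact (sum_le_sum fun j _ => Nat.div_mul_le_self _ _).trans (hx.shift 1 N)
  have hsingle : ∑ j ∈ range N, (Pi.single i (d / 2) : ℕ → ℕ) j ≤ d / 2 := by
    rw [sum_pi_single']
    split_ifs <;> simp
  rw [sum_add_distrib]
  omega

/-- The leaf budget `x` is met, at all depths `j < n`, by the leaf counts of some `LeafBounded`
tree (following Gebauer, Szabó and Tardos). -/
def Constructible (n d : ℕ) (x : ℕ → ℕ) : Prop :=
  ∃ t : BinaryTree Unit, LeafBounded n d t ∧ ∀ j < n, leafCount t j ≤ x j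

lemma Constructible.mono (hy : Constructible n d y) (hyx : y ≤ x) : Constructible n d x :=
  hy.imp fun _ ht => ⟨ht.1, fun j hj => (ht.2 j hj).trans (hyx j)⟩

lemma constructible_of_one_le (h : 1 ≤ x 0) : Constructible n d x :=
  ⟨.nil, trivial, fun j _ => by cases j <;> simp [leafCount, h]⟩

lemma Constructible.node (hx : TotalLE d x) (hy : Constructible n d y) (hz : Constructible n d z)
    (h : ∀ j, j + 1 < n → y j + z j ≤ x (j + 1)) : Constructible n d x := by
  obtain ⟨l, hl, hly⟩ := hy
  obtain ⟨r, hr, hrz⟩ := hz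
  have hcount : ∀ j < n, leafCount (.node () l r) j ≤ x j := by
    rintro (_ | j) hj
    · exact Nat.zero_le _
    · exact (add_le_add (hly j (by omega)) (hrz j (by omega))).trans (h j hj)
  exact ⟨.node () l r,
    ⟨hl, hr, (sum_le_sum fun j hj => hcount j (mem_range.1 hj)).trans (hx n)⟩, hcount⟩

lemma constructible_of_pow_mul_le {r : ℕ} (hx : TotalLE d x) (hy : Constructible n d y)
    (h : ∀ j, 2 ^ r * y j ≤ x (j + r)) : Constructible n d x := by
  induction r generalizing x with
  | zero => exact hy.mono fun j => by simpa using h j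
  | succ r ih =>
    have hchild : Constructible n d fun j => x (j + 1) / 2 := by
      refine ih ((hx.shift 1).mono fun j => Nat.div_le_self _ _) fun j => ?_
      rw [Nat.le_div_iff_mul_le two_pos, add_assoc]
      exact (by ring : 2 ^ r * y j * 2 = 2 ^ (r + 1) * y j).trans_le (h j)
    exact hchild.node hx hchild fun j _ => by omega

lemma constructible_of_add_pow_sub_one_mul_le {r : ℕ} (hx : TotalLE d x)
    (hy : Constructible n d y) (hz : Constructible n d z)
    (h : ∀ j, y j + (2 ^ r - 1) * z j ≤ x (j + r)) : Constructible n d x := by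
  induction r generalizing x with
  | zero => exact hy.mono fun j => by simpa using h j
  | succ r ih =>
    have hpow (c : ℕ) : (2 ^ (r + 1) - 1) * c = 2 ^ r * c + (2 ^ r - 1) * c := by
      rw [← add_mul, pow_succ]
      congr 1
      have := Nat.one_le_two_pow (n := r)
      omega
    let u : ℕ → ℕ := fun j => if r ≤ j then 2 ^ r * z (j - r) else 0
    have hu_add (j : ℕ) : u (j + r) = 2 ^ r * z j := by simp [u]
    have hux (j : ℕ) : u j ≤ x (j + 1) := by
      rcases le_or_gt r j with hj | hj
      · obtain ⟨i, rfl⟩ := Nat.exists_eq_add_of_le' hj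
        have := h i
        rw [hpow, ← add_assoc i] at this
        rw [hu_add]
        omega
      · simp [u, hj.not_ge]
    have hu : Constructible n d u :=
      constructible_of_pow_mul_le ((hx.shift 1).mono hux) hz fun j => (hu_add j).ge
    have hrest : Constructible n d fun j => x (j + 1) - u j := by
      refine ih ((hx.shift 1).mono fun j => Nat.sub_le _ _) fun j => ?_
      have := h j
      rw [hpow, ← add_assoc j] at this
      rw [hu_add]
      omega
    exact hu.node hx hrest fun j _ => by have := hux j; omega

end Constructible

section Kraft

variable {n d k m : ℕ} {x : ℕ → ℕ}

/-- The Kraft sum `∑ x j / 2 ^ j` over the levels `j ≤ k`, scaled by `2 ^ k`. -/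
def kraftSum (k : ℕ) (x : ℕ → ℕ) : ℕ :=
  ∑ j ∈ range (k + 1), x j * 2 ^ (k - j)

lemma kraftSum_zero (x : ℕ → ℕ) : kraftSum 0 x = x 0 := by
  simp [kraftSum]

lemma kraftSum_succ (k : ℕ) (x : ℕ → ℕ) :
    kraftSum (k + 1) x = 2 * kraftSum k x + x (k + 1) := by
  rw [kraftSum, sum_range_succ, Nat.sub_self, pow_zero, mul_one, kraftSum, mul_sum]
  congr 1
  refine sum_congr rfl fun j hj => ?_
  rw [Nat.sub_add_comm (mem_range_succ_iff.1 hj), pow_succ]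
  ring

lemma kraftSum_succ' (k : ℕ) (x : ℕ → ℕ) :
    kraftSum (k + 1) x = kraftSum k (fun j => x (j + 1)) + x 0 * 2 ^ (k + 1) := by
  simp only [kraftSum, sum_range_succ' _ (k + 1), Nat.add_sub_add_right, Nat.sub_zero]

lemma kraftSum_add (k : ℕ) (x y : ℕ → ℕ) :
    kraftSum k (x + y) = kraftSum k x + kraftSum k y := by
  simp only [kraftSum, Pi.add_apply, add_mul, sum_add_distrib]

lemma kraftSum_succ_update (k c : ℕ) (x : ℕ → ℕ) :
    kraftSum (k + 1) (Function.update x (k + 1) c) = 2 * kraftSum k x + c := by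
  rw [kraftSum_succ, Function.update_self]
  congr 2
  refine sum_congr rfl fun j hj => ?_
  rw [Function.update_of_ne (mem_range.1 hj).ne]

lemma exists_le_kraftSum_eq (h : m * 2 ^ k ≤ kraftSum k x) :
    ∃ y ≤ x, kraftSum k y = m * 2 ^ k := by
  induction k with
  | zero =>
    refine ⟨Function.update x 0 m, update_le_iff.2 ⟨?_, fun j _ => le_rfl⟩, ?_⟩
    · simpa [kraftSum_zero] using h
    · simp [kraftSum_zero]
  | succ k ih =>
    have hdouble : m * 2 ^ (k + 1) = 2 * (m * 2 ^ k) := by ring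
    rw [kraftSum_succ] at h
    rcases le_total (m * 2 ^ k) (kraftSum k x) with hk | hk
    · obtain ⟨y, hyx, hy⟩ := ih hk
      refine ⟨Function.update y (k + 1) 0,
        update_le_iff.2 ⟨Nat.zero_le _, fun j _ => hyx j⟩, ?_⟩
      rw [kraftSum_succ_update, hy, hdouble, add_zero]
    · refine ⟨Function.update x (k + 1) (m * 2 ^ (k + 1) - 2 * kraftSum k x),
        update_le_iff.2 ⟨by omega, fun j _ => le_rfl⟩, ?_⟩
      rw [kraftSum_succ_update]
      omega

theorem constructible_of_kraftSum_ge (hx : TotalLE d x) (h : 2 ^ k ≤ kraftSum k x) :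
    Constructible n d x := by
  induction k generalizing x with
  | zero => exact constructible_of_one_le (by simpa [kraftSum_zero] using h)
  | succ k ih =>
    rcases Nat.eq_zero_or_pos (x 0) with hx0 | hx0
    swap
    · exact constructible_of_one_le hx0
    rw [kraftSum_succ', hx0, zero_mul, add_zero, pow_succ] at h
    obtain ⟨y, hyx, hy⟩ := exists_le_kraftSum_eq (m := 1) (k := k) (x := fun j => x (j + 1))
      (by omega)
    obtain ⟨z, hz⟩ := exists_add_of_le hyx
    have hsplit (j : ℕ) : x (j + 1) = y j + z j := congrFun hz j
    rw [hz, kraftSum_add] at h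
    exact (ih ((hx.shift 1).mono hyx) (by omega)).node hx
      (ih ((hx.shift 1).mono fun j => by simp [hsplit]) (by omega)) fun j _ => (hsplit j).ge

lemma le_of_sum_Ico_ne_zero {a b : ℕ} {f : ℕ → ℕ} (h : ∑ j ∈ Ico a b, f j ≠ 0) : a ≤ b := by
  by_contra hab
  exact h (by rw [Ico_eq_empty_of_le (not_le.1 hab).le, sum_empty])

lemma constructible_of_sum_weights {e p : ℕ} {g : ℕ → ℕ} (hx : TotalLE d x)
    (hg : ∀ j ∈ Ico e p, g j * 2 ^ (j - e) ≤ x j) (h : 2 ^ e ≤ ∑ j ∈ Ico e p, g j) :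
    Constructible n d x := by
  have hep : e ≤ p := le_of_sum_Ico_ne_zero ((Nat.two_pow_pos e).trans_le h).ne'
  refine constructible_of_kraftSum_ge (k := p) hx ?_
  calc 2 ^ p = 2 ^ e * 2 ^ (p - e) := by rw [← pow_add, Nat.add_sub_cancel' hep]
    _ ≤ ∑ j ∈ Ico e p, g j * 2 ^ (p - e) := by
        rw [← sum_mul]
        exact Nat.mul_le_mul_right _ h
    _ ≤ ∑ j ∈ Ico e p, x j * 2 ^ (p - j) := by
        refine sum_le_sum fun j hj => ?_
        obtain ⟨hej, hjp⟩ := mem_Ico.1 hj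
        rw [← Nat.sub_add_sub_cancel hjp.le hej, add_comm, pow_add, ← mul_assoc]
        exact Nat.mul_le_mul_right _ (hg j hj)
    _ ≤ kraftSum p x := sum_le_sum_of_subset fun j hj => by
        simp only [mem_Ico, mem_range] at hj ⊢
        omega

end Kraft

section Reachable

variable {n d r p e c : ℕ} {x y g : ℕ → ℕ}

/-- Subdividing the root, whose leaf budget is `0`, leads to the leaf budget `x`: the total of `x`
is admissible, and constructing `x` is enough to construct `0`. -/
def Reachable (n d : ℕ) (x : ℕ → ℕ) : Prop :=
  TotalLE d x ∧ (Constructible n d x → Constructible n d 0)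

lemma reachable_zero (n d : ℕ) : Reachable n d 0 :=
  ⟨fun N => by simp, id⟩

lemma Reachable.mono (hx : Reachable n d x) (hyx : y ≤ x) : Reachable n d y :=
  ⟨hx.1.mono hyx, fun hy => hx.2 (hy.mono hyx)⟩

/-- Both children get half of the budget, and also `d / 2` leaves at depth `n - 1`, which are out of
reach of their parent. -/
lemma Reachable.halve (hx : Reachable n d x) :
    Reachable n d fun j => x (j + 1) / 2 + (Pi.single (n - 1) (d / 2) : ℕ → ℕ) j := by
  refine ⟨hx.1.halve_add_single _, fun hy => hx.2 (hy.node hx.1 hy fun j hj => ?_)⟩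
  rw [Pi.single_eq_of_ne (by omega)]
  omega

/-- One descendant at depth `r` gets the whole budget below level `p`; it is constructible by
assumption. The others share the rest of the budget. -/
lemma Reachable.cut (hx : Reachable n d x)
    (hlow : Constructible n d fun j => if j + r < p then x (j + r) else 0) :
    Reachable n d fun j => if j + r < p then 0 else x (j + r) / (2 ^ r - 1) := by
  refine ⟨(hx.1.shift r).mono fun j => ?_, fun hhigh =>
    hx.2 (constructible_of_add_pow_sub_one_mul_le (r := r) hx.1 hlow hhigh fun j => ?_)⟩
  · dsimp only
    split_ifs
    exacts [Nat.zero_le _, Nat.div_le_self _ _]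
  · split_ifs
    · simp
    · simpa using Nat.mul_div_le _ _

/-- The leaf budget whose levels `j` with `e ≤ j < n` contribute `g j / 2 ^ e` to the Kraft sum. -/
def levelBudget (n e : ℕ) (g : ℕ → ℕ) (j : ℕ) : ℕ :=
  if e ≤ j ∧ j < n then g j * 2 ^ (j - e) else 0

lemma levelBudget_mono {g' : ℕ → ℕ} (h : ∀ j, e ≤ j → j < n → g' j ≤ g j) :
    levelBudget n e g' ≤ levelBudget n e g := fun j => by
  unfold levelBudget
  split_ifs with hj
  · exact Nat.mul_le_mul_right _ (h j hj.1 hj.2)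
  · exact le_rfl

lemma levelBudget_add (he : e ≤ p) (hn : p + r < n) :
    levelBudget n e g (p + r) = 2 ^ r * g (p + r) * 2 ^ (p - e) := by
  rw [levelBudget, if_pos (by omega), Nat.sub_add_comm he, pow_add]
  ring

lemma levelBudget_zero (n e : ℕ) : levelBudget n e 0 = 0 := by
  ext j
  simp [levelBudget]

lemma Reachable.levelBudget_succ (hc : c * 2 ^ (n - 1 - e) ≤ d / 2)
    (h : Reachable n d (levelBudget n e g)) :
    Reachable n d (levelBudget n e fun j => if j + 1 < n then g (j + 1) else c) := by
  refine h.halve.mono fun j => ?_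
  dsimp only
  by_cases hj : e ≤ j ∧ j < n
  · rw [levelBudget, if_pos hj]
    split_ifs with hjn
    · rw [levelBudget_add hj.1 hjn, pow_one, mul_assoc, Nat.mul_div_cancel_left _ two_pos]
      exact Nat.le_add_right _ _
    · obtain rfl : j = n - 1 := by omega
      rw [Pi.single_eq_same]
      exact hc.trans (Nat.le_add_left _ _)
  · rw [levelBudget, if_neg hj]
    exact Nat.zero_le _

lemma Reachable.levelBudget_shift (hc : c * 2 ^ (n - 1 - e) ≤ d / 2) (s : ℕ)
    (h : Reachable n d (levelBudget n e g)) :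
    Reachable n d (levelBudget n e fun j => if j + s < n then g (j + s) else c) := by
  induction s with
  | zero => exact h.mono (levelBudget_mono fun j _ hj => by simp [hj])
  | succ s ih =>
    refine (ih.levelBudget_succ hc).mono (levelBudget_mono fun j _ _ => le_of_eq ?_)
    rw [add_right_comm, ← add_assoc]
    split_ifs <;> first | rfl | omega

lemma reachable_levelBudget_const (hc : c * 2 ^ (n - 1 - e) ≤ d / 2) :
    Reachable n d (levelBudget n e fun _ => c) := by
  have h0 : Reachable n d (levelBudget n e 0) := by
    rw [levelBudget_zero]
    exact reachable_zero n d
  simpa using h0.levelBudget_shift hc n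

lemma Reachable.constructible_zero (h : Reachable n d (levelBudget n e g)) (hp : p ≤ n)
    (hmass : 2 ^ e ≤ ∑ j ∈ Ico e p, g j) : Constructible n d 0 := by
  refine h.2 (constructible_of_sum_weights (p := p) h.1 (fun j hj => ?_) hmass)
  rw [levelBudget, if_pos ⟨(mem_Ico.1 hj).1, (mem_Ico.1 hj).2.trans_le hp⟩]

lemma Reachable.levelBudget_cut (h : Reachable n d (levelBudget n e g)) (hp : p ≤ n) (hre : r ≤ e)
    (hmass : 2 ^ e ≤ 2 ^ r * ∑ j ∈ Ico e p, g j) :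
    Reachable n d (levelBudget n e fun j =>
      if p ≤ j + r ∧ j + r < n then 2 ^ r * g (j + r) / (2 ^ r - 1) else 0) := by
  obtain ⟨e, rfl⟩ := Nat.exists_eq_add_of_le' hre
  rw [pow_add, mul_comm, mul_le_mul_iff_right₀ (by positivity)] at hmass
  have hep : e + r ≤ p := le_of_sum_Ico_ne_zero ((Nat.two_pow_pos e).trans_le hmass).ne'
  obtain ⟨p, rfl⟩ := Nat.exists_eq_add_of_le' ((Nat.le_add_left r e).trans hep)
  rw [← sum_Ico_add'] at hmass
  have hlow : Constructible n d fun j =>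
      if j + r < p + r then levelBudget n (e + r) g (j + r) else 0 := by
    refine constructible_of_sum_weights ((h.1.shift r).mono fun j => ?_) (fun j hj => ?_) hmass
    · dsimp only
      split_ifs
      exacts [le_rfl, Nat.zero_le _]
    · obtain ⟨hej, hjp⟩ := mem_Ico.1 hj
      rw [if_pos (by omega), levelBudget, if_pos (by omega), Nat.add_sub_add_right]
  refine (h.cut hlow).mono fun j => ?_
  by_cases hj : (e + r ≤ j ∧ j < n) ∧ p + r ≤ j + r ∧ j + r < n
  swap
  · simp only [levelBudget, ← ite_and, ite_mul, zero_mul, if_neg hj, Nat.zero_le]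
  obtain ⟨hj, hpj⟩ := hj
  dsimp only
  rw [levelBudget, if_pos hj, if_pos hpj, if_neg hpj.1.not_gt, levelBudget_add hj.1 hpj.2]
  calc 2 ^ r * g (j + r) / (2 ^ r - 1) * 2 ^ (j - (e + r))
      ≤ 2 ^ (j - (e + r)) * (2 ^ r * g (j + r)) / (2 ^ r - 1) := by
        rw [mul_comm]
        exact Nat.mul_div_le_mul_div_assoc _ _ _
    _ = 2 ^ r * g (j + r) * 2 ^ (j - (e + r)) / (2 ^ r - 1) := by rw [mul_comm]

lemma Reachable.levelBudget_cut_shift (h : Reachable n d (levelBudget n e g)) (hp : p ≤ n)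
    (hre : r ≤ e) (hmass : 2 ^ e ≤ 2 ^ r * ∑ j ∈ Ico e p, g j)
    (hc : c * 2 ^ (n - 1 - e) ≤ d / 2) :
    Reachable n d (levelBudget n e fun j =>
      if j + p < n then 2 ^ r * g (j + p) / (2 ^ r - 1) else if j + p < n + r then 0 else c) := by
  have hep : e ≤ p := le_of_sum_Ico_ne_zero fun h0 => by
    rw [h0, mul_zero] at hmass
    exact hmass.not_gt (Nat.two_pow_pos e)
  obtain ⟨s, rfl⟩ := Nat.exists_eq_add_of_le' (hre.trans hep)
  refine ((h.levelBudget_cut hp hre hmass).levelBudget_shift hc s).mono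
    (levelBudget_mono fun j _ _ => le_of_eq ?_)
  rw [← add_assoc]
  split_ifs <;> first | rfl | omega

end Reachable

section BlockWeights

variable {n d q e u a : ℕ} {b : ℕ → ℕ}

/-- Level weights that are constant, with value `b i`, on the levels `i * q + e ≤ j < (i + 1) * q`
of the `i`-th block of `q` levels. The first `e` levels of every block get weight `0`: this absorbs
the offset between the blocks and the level at which refilling starts after a cut. -/
def blockWeight (q e : ℕ) (b : ℕ → ℕ) (j : ℕ) : ℕ :=
  if e ≤ j % q then b (j / q) else 0

lemma sum_range_blockWeight (hq : 0 < q) (b : ℕ → ℕ) (a : ℕ) :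
    ∑ j ∈ range (a * q), blockWeight q e b j = (q - e) * ∑ i ∈ range a, b i := by
  induction a with
  | zero => simp
  | succ a ih =>
    have block : ∀ j ∈ range q, blockWeight q e b (a * q + j) = if e ≤ j then b a else 0 := by
      intro j hj
      have hj := mem_range.1 hj
      rw [blockWeight, Nat.mul_add_mod_self_right, Nat.mod_eq_of_lt hj, mul_comm,
        Nat.mul_add_div hq, Nat.div_eq_of_lt hj, add_zero]
    rw [add_mul, one_mul, sum_range_add, ih, sum_range_succ, mul_add, sum_congr rfl block,
      ← sum_filter, sum_const, smul_eq_mul]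
    congr 2
    rw [range_eq_Ico, Ico_filter_le, Nat.card_Ico, Nat.zero_max]

lemma sum_Ico_blockWeight (he : e < q) (b : ℕ → ℕ) (a : ℕ) :
    ∑ j ∈ Ico e (a * q), blockWeight q e b j = (q - e) * ∑ i ∈ range a, b i := by
  rw [← sum_range_blockWeight (Nat.zero_lt_of_lt he)]
  refine sum_subset (fun j hj => mem_range.2 (mem_Ico.1 hj).2) fun j hj hje => ?_
  have hje : j < e := by
    simp only [mem_range, mem_Ico] at hj hje
    omega
  rw [blockWeight, Nat.mod_eq_of_lt (hje.trans he), if_neg hje.not_ge]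

/-- The block weights (out of `32` blocks, in units where a fresh block has weight `128`) after the
first `a` blocks have been cut off into one of four grandchildren and the tree has been subdivided
further until the levels have moved up by `a` blocks. -/
def cutBlocks (a : ℕ) (b : ℕ → ℕ) (i : ℕ) : ℕ :=
  if i + a < 32 then 4 * b (i + a) / 3 else 128

/-- Starting from the block weights `b`, one can successively cut off prefixes of lengths `as`, and
in the end the whole budget is constructible. Kraft sum `1` corresponds to total block weight
`2 ^ 13`, increased by `1` to leave room for rounding; a prefix cut off into one of four
grandchildren needs a quarter of it. -/
def CutSchedule : List ℕ → (ℕ → ℕ) → Prop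
  | [], b => 8193 ≤ ∑ i ∈ range 32, b i
  | a :: as, b => a ≤ 32 ∧ 8193 ≤ 4 * ∑ i ∈ range a, b i ∧ CutSchedule as (cutBlocks a b)

instance instDecidableCutSchedule : (as : List ℕ) → (b : ℕ → ℕ) → Decidable (CutSchedule as b)
  | [], b => inferInstanceAs (Decidable (8193 ≤ ∑ i ∈ range 32, b i))
  | a :: as, b =>
    haveI := instDecidableCutSchedule as (cutBlocks a b)
    inferInstanceAs (Decidable (a ≤ 32 ∧ 8193 ≤ 4 * ∑ i ∈ range a, b i ∧ _))

/-- The schedule is greedy: every prefix is the shortest one that is heavy enough. -/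
lemma cutSchedule_const :
    CutSchedule [17, 13, 12, 10, 10, 10, 9, 9, 8, 8, 7, 7, 7, 6, 6, 6, 6] fun _ => 128 := by
  decide

lemma blockWeight_cutBlocks_le (hqn : 32 * q ≤ n) (hnq : n + 2 ≤ 32 * q + e) (he : e < q)
    (j : ℕ) :
    blockWeight q e (fun i => u * cutBlocks a b i) j ≤
      if j + a * q < n then
        2 ^ 2 * blockWeight q e (fun i => u * b i) (j + a * q) / (2 ^ 2 - 1)
      else if j + a * q < n + 2 then 0 else u * 128 := by
  have hq : 0 < q := Nat.zero_lt_of_lt he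
  have hmod : (j + a * q) % q = j % q := Nat.add_mul_mod_self_right j a q
  have hdiv : (j + a * q) / q = j / q + a := Nat.add_mul_div_right j a hq
  have hj := Nat.div_add_mod (j + a * q) q
  have hblock : j / q + a < 32 ∨ 32 * q ≤ q * (j / q + a) := by
    rcases lt_or_ge (j / q + a) 32 with h | h
    · exact .inl h
    · exact .inr (mul_comm 32 q ▸ Nat.mul_le_mul_left q h)
  have hsmall : j / q + a < 32 → q * (j / q + a) + q ≤ 32 * q := fun h => by
    rw [← Nat.mul_succ, mul_comm]
    exact Nat.mul_le_mul_right q h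
  have hlt := Nat.mod_lt j hq
  rw [hmod, hdiv] at hj
  unfold blockWeight
  rw [hmod, hdiv]
  by_cases hje : e ≤ j % q
  swap
  · simp [hje]
  simp only [if_pos hje, cutBlocks]
  have hscale : u * (4 * b (j / q + a) / 3) ≤ 2 ^ 2 * (u * b (j / q + a)) / (2 ^ 2 - 1) := by
    rw [mul_left_comm]
    exact Nat.mul_div_le_mul_div_assoc _ _ _
  split_ifs <;> first | exact hscale | omega

lemma Reachable.constructible_zero_of_cutSchedule (hqn : 32 * q ≤ n) (hnq : n + 2 ≤ 32 * q + e)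
    (he2 : 2 ≤ e) (he : e < q) (hc : u * 128 * 2 ^ (n - 1 - e) ≤ d / 2)
    (hunit : 2 ^ e ≤ (q - e) * (u * 8193)) {as : List ℕ} (has : CutSchedule as b)
    (h : Reachable n d (levelBudget n e (blockWeight q e fun i => u * b i))) :
    Constructible n d 0 := by
  induction as generalizing b with
  | nil =>
    refine h.constructible_zero hqn ?_
    rw [sum_Ico_blockWeight he, ← mul_sum]
    exact hunit.trans (by gcongr; exact has)
  | cons a as ih =>
    obtain ⟨ha, hmass, has⟩ := has
    refine ih has ((h.levelBudget_cut_shift (r := 2) (p := a * q) (c := u * 128)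
      ((Nat.mul_le_mul_right q ha).trans hqn) he2 ?_ hc).mono
      (levelBudget_mono fun j _ _ => blockWeight_cutBlocks_le hqn hnq he j))
    rw [sum_Ico_blockWeight he, ← mul_sum]
    calc 2 ^ e ≤ (q - e) * (u * (4 * ∑ i ∈ range a, b i)) := hunit.trans (by gcongr)
      _ = 2 ^ 2 * ((q - e) * (u * ∑ i ∈ range a, b i)) := by ring

end BlockWeights

section Parameters

/-- The left-hand side is at most `8192 * (1 + 2⁻¹⁵) ^ 2 * (q - e) * u`, as `u` and `q` are much
larger than `1` and `e`. -/
lemma two_pow_le_of_div_eq {n q u e : ℕ} (hq : n / 32 = q)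
    (hu : 2 ^ e / (256 * n) = u) (hu_large : 2 ^ 15 ≤ u) (hq_large : 2 ^ 15 * (e + 1) + e ≤ q) :
    2 ^ e ≤ (q - e) * (u * 8193) := by
  obtain ⟨s, rfl⟩ := Nat.exists_eq_add_of_le' ((Nat.le_add_left _ _).trans hq_large)
  have hpow : 2 ^ e < 256 * n * (u + 1) := by
    rw [← hu]
    exact Nat.lt_mul_div_succ _ (by omega)
  have hn_le : n ≤ 32 * (s + e + 1) := by omega
  have hs : 2 ^ 15 * (s + e + 1) ≤ (2 ^ 15 + 1) * s := by omega
  have hu' : 2 ^ 15 * (u + 1) ≤ (2 ^ 15 + 1) * u := by omega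
  have hprod : (2 ^ 15 * 2 ^ 15) * ((s + e + 1) * (u + 1)) ≤
      ((2 ^ 15 + 1) * (2 ^ 15 + 1)) * (s * u) := by
    simpa only [mul_mul_mul_comm] using Nat.mul_le_mul hs hu'
  rw [Nat.add_sub_cancel]
  calc 2 ^ e ≤ 256 * (32 * (s + e + 1)) * (u + 1) := hpow.le.trans (by gcongr)
    _ = 8192 * ((s + e + 1) * (u + 1)) := by ring
    _ ≤ 8193 * (s * u) := by omega
    _ = s * (u * 8193) := by ring

lemma unit_mul_two_pow_le {n e : ℕ} (hen : e < n) :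
    2 ^ e / (256 * n) * 128 * 2 ^ (n - 1 - e) ≤ 2 ^ (n - 1) / n / 2 := by
  rw [Nat.div_div_eq_div_mul, Nat.le_div_iff_mul_le (by omega)]
  calc 2 ^ e / (256 * n) * 128 * 2 ^ (n - 1 - e) * (n * 2)
      = (256 * n) * (2 ^ e / (256 * n)) * 2 ^ (n - 1 - e) := by ring
    _ ≤ 2 ^ e * 2 ^ (n - 1 - e) := Nat.mul_le_mul_right _ (Nat.mul_div_le _ _)
    _ = 2 ^ (n - 1) := by rw [← pow_add, Nat.add_sub_cancel' (by omega)]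

lemma pow_fifteen_mul_le_two_pow {k : ℕ} (hk : 28 ≤ k) :
    2 ^ 15 * (2 * k + 1) + 2 * k ≤ 2 ^ (k - 5) := by
  induction k, hk using Nat.le_induction with
  | base => norm_num
  | succ k hk ih =>
    rw [Nat.sub_add_comm (by omega), pow_succ]
    omega

theorem constructible_zero_of_large {n : ℕ} (hn : 2 ^ 28 ≤ n) :
    Constructible n (2 ^ (n - 1) / n) 0 := by
  have hn0 : n ≠ 0 := by omega
  obtain ⟨k, hk⟩ : ∃ k, Nat.log 2 n = k := ⟨_, rfl⟩
  have hk_le : 2 ^ k ≤ n := hk ▸ Nat.pow_log_le_self 2 hn0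
  have hlt : n < 2 ^ (k + 1) := hk ▸ Nat.lt_pow_succ_log_self one_lt_two n
  have hk28 : 28 ≤ k := hk ▸ Nat.le_log_of_pow_le one_lt_two hn
  obtain ⟨q, hq⟩ : ∃ q, n / 32 = q := ⟨_, rfl⟩
  obtain ⟨u, hu⟩ : ∃ u, 2 ^ (2 * k) / (256 * n) = u := ⟨_, rfl⟩
  have hu_large : 2 ^ 15 ≤ u := by
    rw [← hu, Nat.le_div_iff_mul_le (by omega)]
    calc 2 ^ 15 * (256 * n) ≤ 2 ^ 23 * 2 ^ (k + 1) := by omega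
      _ ≤ 2 ^ (2 * k) := by
        rw [← pow_add]
        exact Nat.pow_le_pow_right two_pos (by omega)
  have hq_large : 2 ^ 15 * (2 * k + 1) + 2 * k ≤ q := by
    refine (pow_fifteen_mul_le_two_pow hk28).trans ?_
    rw [← hq, Nat.le_div_iff_mul_le (by norm_num)]
    refine le_of_eq_of_le ?_ hk_le
    rw [show 32 = 2 ^ 5 from rfl, ← pow_add, Nat.sub_add_cancel (by omega)]
  have hc := hu ▸ unit_mul_two_pow_le (n := n) (e := 2 * k) (by omega)
  have hstart : Reachable n (2 ^ (n - 1) / n)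
      (levelBudget n (2 * k) (blockWeight q (2 * k) fun _ => u * 128)) := by
    refine (reachable_levelBudget_const hc).mono (levelBudget_mono fun j _ _ => ?_)
    rw [blockWeight]
    split_ifs
    exacts [le_rfl, Nat.zero_le _]
  exact hstart.constructible_zero_of_cutSchedule (by omega) (by omega) (by omega) (by omega) hc
    (two_pow_le_of_div_eq hq hu hu_large hq_large) cutSchedule_const

lemma Constructible.exists_makerWins {n d : ℕ} (hd : 1 ≤ d) (h : Constructible n d 0) :
    ∃ E : Finset (Finset (List Bool)), (∀ e ∈ E, #e = n) ∧ (∀ v, #{e ∈ E | v ∈ e} ≤ d) ∧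
      MakerWins E (E.biUnion id) := by
  obtain ⟨t, hbound, hcount⟩ := h
  exact ⟨treeHypergraph n t,
    card_of_mem_treeHypergraph fun _ => le_length_of_leafCount_eq_zero fun j hj =>
      Nat.le_zero.1 (hcount j hj),
    hbound.degree_treeHypergraph_le hd, makerWins_treeHypergraph n t⟩

end Parameters

end MakerBreaker

theorem maker_win_max_degree_small_general : ∃ n₀ : ℕ, ∀ n : ℕ, n₀ ≤ n →
    ∃ E : Finset (Finset (List Bool)),
      (∀ e ∈ E, e.card = n) ∧
      (∀ v : List Bool, n * (E.filter fun e => v ∈ e).card ≤ 2 ^ (n - 1)) ∧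
      MakerWins E (E.biUnion id) := by
  refine ⟨2 ^ 28, fun n hn => ?_⟩
  have hd : 1 ≤ 2 ^ (n - 1) / n :=
    Nat.div_pos (Nat.le_of_pred_lt (Nat.lt_two_pow_self (n := n - 1))) (by omega)
  obtain ⟨E, hcard, hdeg, hwin⟩ :=
    (MakerBreaker.constructible_zero_of_large hn).exists_makerWins hd
  exact ⟨E, hcard, fun v => (Nat.mul_le_mul_left n (hdeg v)).trans (Nat.mul_div_le _ _), hwin⟩

/-- There is an `n`-uniform hypergraph with maximum degree at most `2^(n-1)/n`
(for `n` a sufficiently large power of 2) on which Maker has a winning strategy. -/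
theorem maker_win_max_degree_small : ∃ n₀ : ℕ, ∀ n : ℕ, n₀ ≤ n → (∃ k, n = 2 ^ k) →
    ∃ E : Finset (Finset (List Bool)),
      (∀ e ∈ E, e.card = n) ∧
      (∀ v : List Bool, n * (E.filter fun e => v ∈ e).card ≤ 2 ^ (n - 1)) ∧
      MakerWins E (E.biUnion id) :=
  maker_win_max_degree_small_general.imp fun _ h n hn _ => h n hn
end

section
/- There exists an n-uniform hypergraph H with maximum vertex degree at most 2^(n+1)/n on which Maker has a winning strategy in the Maker–Breaker game. -/
/-!
Vertices are the nodes of the infinite binary tree, written as words over `Bool`; the children of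
`v` are `true :: v` and `false :: v`, so the ancestors of a node are its suffixes. Maker always
claims the current node; Breaker's reply spoils at most one of the two subtrees below it, and Maker
descends into the other. He therefore wins as soon as every leaf of the tree on the board is the
lower end of a hyperedge consisting of `n` consecutive ancestors.

To keep the degrees small, the leaves are put at different depths. Below each node at depth `r + s`,
where `n = r + s + 1`, hangs a full binary tree of depth `m`, where `m < 2 ^ s` is the number coded
by the last `s` steps leading to that node. The hyperedges of the leaves of this tree start at depth
`m`, so a node at depth `a ≤ r` only meets those with `m ≤ a`. There are `2 ^ (r - a) * 2 ^ m` of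
them for each `m`, which sums to less than `2 ^ (r + 1)`. A node below depth `r` has a single
ancestor at depth `r`, under which there are fewer than `2 ^ 2 ^ s` leaves altogether.
-/

open Finset

section TreeGame

variable {α : Type}

theorem not_cons_suffix_of_ne {a b : α} {v w : List α} (hab : a ≠ b) (ha : a :: v <:+ w) :
    ¬ b :: v <:+ w := fun hb =>
  hab (List.cons.inj <|
    (List.suffix_of_suffix_length_le ha hb (by simp)).eq_of_length (by simp)).1

variable [DecidableEq α]

/-- The part of the board `B` lying in the subtree rooted at `v`. -/
def boardBelow (B : Finset (List α)) (v : List α) : Finset (List α) :=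
  B.filter fun u => v <:+ u

theorem mem_boardBelow {B : Finset (List α)} {u v : List α} :
    u ∈ boardBelow B v ↔ u ∈ B ∧ v <:+ u := mem_filter

theorem boardBelow_cons_ssubset {B : Finset (List α)} {v : List α} (hv : v ∈ B) (a : α) :
    boardBelow B (a :: v) ⊂ boardBelow B v := by
  refine (ssubset_iff_of_subset fun u hu => ?_).2
    ⟨v, mem_boardBelow.2 ⟨hv, List.suffix_rfl⟩, fun h => ?_⟩
  · rw [mem_boardBelow] at hu ⊢
    exact ⟨hu.1, (List.suffix_cons a v).trans hu.2⟩
  · simpa using (mem_boardBelow.1 h).2.length_le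

/-- The invariant is that Maker, about to claim `v`, already owns the proper ancestors of `v`, and
that the subtree below `v` is still unclaimed. -/
theorem makerWinsAux_of_branching {E : Finset (Finset (List α))} {B : Finset (List α)}
    (hB : ∀ v ∈ B, (∃ e ∈ E, ∀ u ∈ e, u <:+ v) ∨ ∃ a b, a ≠ b ∧ a :: v ∈ B ∧ b :: v ∈ B)
    {k : ℕ} {M U : Finset (List α)} {v : List α} (hv : v ∈ B) (hU : boardBelow B v ⊆ U)
    (hM : ∀ u, u <:+ v → u ∈ insert v M) (hk : #(boardBelow B v) ≤ k) :
    MakerWinsAux E k M U := by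
  have hvv : v ∈ boardBelow B v := mem_boardBelow.2 ⟨hv, List.suffix_rfl⟩
  induction k generalizing M U v with
  | zero => exact absurd hk (card_pos.2 ⟨v, hvv⟩).not_ge
  | succ k ih =>
    refine .inr ⟨v, hU hvv, (hB v hv).imp ?_ ?_⟩
    · rintro ⟨e, he, hev⟩
      exact ⟨e, he, fun u hu => hM u (hev u hu)⟩
    rintro ⟨a, b, hab, ha, hb⟩
    have hdescend : ∀ c, boardBelow B (c :: v) ⊆ U.erase v := fun c u hu =>
      mem_erase.2 ⟨fun huv => by simpa [huv] using (mem_boardBelow.1 hu).2.length_le,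
        hU ((boardBelow_cons_ssubset hv c).subset hu)⟩
    have hself : ∀ c, c :: v ∈ B → c :: v ∈ boardBelow B (c :: v) := fun c hc =>
      mem_boardBelow.2 ⟨hc, List.suffix_rfl⟩
    refine ⟨⟨a :: v, hdescend a (hself a ha)⟩, fun w _ => ?_⟩
    obtain ⟨c, hc, hcw⟩ : ∃ c, c :: v ∈ B ∧ ¬ c :: v <:+ w := by
      by_cases haw : a :: v <:+ w
      · exact ⟨b, hb, not_cons_suffix_of_ne hab haw⟩
      · exact ⟨a, ha, haw⟩
    refine ih hc (fun u hu => ?_) (fun u hu => ?_) ?_ (hself c hc)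
    · refine mem_erase.2 ⟨fun huw => hcw ?_, hdescend c hu⟩
      exact huw ▸ (mem_boardBelow.1 hu).2
    · exact (List.suffix_cons_iff.1 hu).elim (fun h => h ▸ mem_insert_self _ _)
        fun h => mem_insert_of_mem (hM u h)
    · exact Nat.le_of_lt_succ ((card_lt_card (boardBelow_cons_ssubset hv c)).trans_le hk)

theorem makerWins_of_branching {E : Finset (Finset (List α))} {B : Finset (List α)}
    (hroot : [] ∈ B)
    (hB : ∀ v ∈ B, (∃ e ∈ E, ∀ u ∈ e, u <:+ v) ∨ ∃ a b, a ≠ b ∧ a :: v ∈ B ∧ b :: v ∈ B) :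
    MakerWins E B :=
  makerWinsAux_of_branching hB hroot (filter_subset _ _)
    (fun _ hu => List.suffix_nil.1 hu ▸ mem_insert_self _ _) (card_filter_le _ _)

/-- The `n` lowest nodes on the path from the root to `l`, including `l` itself. -/
def pathEdge (n : ℕ) (l : List α) : Finset (List α) :=
  (range n).image l.drop

theorem mem_pathEdge {n : ℕ} {l v : List α} :
    v ∈ pathEdge n l ↔ v <:+ l ∧ l.length < v.length + n := by
  simp only [pathEdge, mem_image, mem_range]
  constructor
  · rintro ⟨j, hj, rfl⟩
    exact ⟨List.drop_suffix _ _, by rw [List.length_drop]; omega⟩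
  · rintro ⟨⟨t, rfl⟩, hlt⟩
    exact ⟨t.length, by simp at hlt; omega, by simp⟩

theorem card_pathEdge {n : ℕ} {l : List α} (hn : n ≤ l.length + 1) : #(pathEdge n l) = n := by
  refine (card_image_of_injOn fun i hi j hj hij => ?_).trans (card_range n)
  have hlen := congrArg List.length hij
  simp only [List.length_drop] at hlen
  simp only [coe_range, Set.mem_Iio] at hi hj
  omega

/-- The hypergraph whose hyperedges are the paths of `n` nodes ending at the nodes in `L`. -/
def pathHypergraph (n : ℕ) (L : Finset (List α)) : Finset (Finset (List α)) :=
  L.image (pathEdge n)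

theorem mem_biUnion_pathHypergraph {n : ℕ} {L : Finset (List α)} {v : List α} :
    v ∈ (pathHypergraph n L).biUnion id ↔ ∃ l ∈ L, v ∈ pathEdge n l := by
  simp [pathHypergraph]

theorem degree_pathHypergraph_le (n : ℕ) (L : Finset (List α)) (v : List α) :
    #{e ∈ pathHypergraph n L | v ∈ e} ≤ #{l ∈ L | v ∈ pathEdge n l} := by
  rw [pathHypergraph, filter_image]
  exact card_image_le

theorem makerWins_pathHypergraph {n : ℕ} {L : Finset (List α)}
    (hroot : ∃ l ∈ L, [] ∈ pathEdge n l)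
    (hL : ∀ l ∈ L, ∀ v ∈ pathEdge n l, v ≠ l → ∃ a b, a ≠ b ∧
      (∃ l' ∈ L, a :: v ∈ pathEdge n l') ∧ ∃ l' ∈ L, b :: v ∈ pathEdge n l') :
    MakerWins (pathHypergraph n L) ((pathHypergraph n L).biUnion id) := by
  refine makerWins_of_branching (mem_biUnion_pathHypergraph.2 hroot) fun v hv => ?_
  simp only [mem_biUnion_pathHypergraph] at hv ⊢
  obtain ⟨l, hl, hvl⟩ := hv
  rcases eq_or_ne v l with rfl | hne
  · exact .inl ⟨pathEdge n v, mem_image_of_mem _ hl, fun u hu => (mem_pathEdge.1 hu).1⟩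
  · exact .inr (hL l hl v hvl hne)

end TreeGame

section Words

variable (α : Type*) [Fintype α]

/-- The words of length `m` over the alphabet `α`. -/
def words (m : ℕ) : Finset (List α) :=
  (univ : Finset (Fin m → α)).map ⟨List.ofFn, List.ofFn_injective⟩

theorem card_words (m : ℕ) : #(words α m) = Fintype.card α ^ m := by
  simp [words]

variable {α} in
theorem mem_words {m : ℕ} {x : List α} : x ∈ words α m ↔ x.length = m := by
  simp only [words, mem_map, mem_univ, true_and, Function.Embedding.coeFn_mk]
  constructor
  · rintro ⟨f, rfl⟩
    exact List.length_ofFn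
  · rintro rfl
    exact ⟨x.get, List.ofFn_get x⟩

variable [DecidableEq α]

/-- The words of length less than `N` over the alphabet `α`. -/
def shortWords (N : ℕ) : Finset (List α) :=
  (range N).biUnion (words α)

variable {α}

theorem mem_shortWords {N : ℕ} {x : List α} : x ∈ shortWords α N ↔ x.length < N := by
  simp [shortWords, mem_words]

theorem card_shortWords_lt (hα : 2 ≤ Fintype.card α) (N : ℕ) :
    #(shortWords α N) < Fintype.card α ^ N :=
  calc #(shortWords α N) ≤ ∑ m ∈ range N, #(words α m) := card_biUnion_le
    _ = ∑ m ∈ range N, Fintype.card α ^ m := sum_congr rfl fun m _ => card_words α m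
    _ < Fintype.card α ^ N := Nat.geomSum_lt hα fun _ => mem_range.1

end Words

section Construction

/-- The `s` lowest binary digits of `m`, least significant first. -/
def bitWord (s m : ℕ) : List Bool :=
  List.ofFn fun i : Fin s => m.testBit i

@[simp]
theorem length_bitWord (s m : ℕ) : (bitWord s m).length = s :=
  List.length_ofFn

theorem exists_bitWord_eq (x : List Bool) : ∃ m < 2 ^ x.length, bitWord x.length m = x :=
  ⟨Nat.ofBits x.get, Nat.ofBits_lt_two_pow _, by
    simp only [bitWord, Nat.testBit_ofBits_lt _ _ (Fin.is_lt _), Fin.eta, List.ofFn_get]⟩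

/-- The leaves below the node `u`: descend `q` steps along any word, then `s` steps spelling a
number `m < N` in binary, then `m` further steps along any word. -/
def leavesBelow (s N q : ℕ) (u : List Bool) : Finset (List Bool) :=
  (shortWords Bool N ×ˢ words Bool q).image fun p =>
    p.1 ++ (bitWord s p.1.length ++ (p.2 ++ u))

theorem mem_leavesBelow {s N q : ℕ} {u l : List Bool} : l ∈ leavesBelow s N q u ↔
    ∃ y z : List Bool, y.length < N ∧ z.length = q ∧
      y ++ (bitWord s y.length ++ (z ++ u)) = l := by
  simp [leavesBelow, mem_shortWords, mem_words, and_assoc]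

theorem card_leavesBelow_le (s N q : ℕ) (u : List Bool) :
    #(leavesBelow s N q u) ≤ 2 ^ (N + q) :=
  calc #(leavesBelow s N q u) ≤ #(shortWords Bool N ×ˢ words Bool q) := card_image_le
    _ = #(shortWords Bool N) * 2 ^ q := by rw [card_product, card_words, Fintype.card_bool]
    _ ≤ 2 ^ N * 2 ^ q :=
      Nat.mul_le_mul_right _ (card_shortWords_lt Fintype.card_bool.ge N).le
    _ = 2 ^ (N + q) := (pow_add 2 N q).symm

/-- The leaves of the whole tree: a full binary tree of depth `m` hangs below each node at depth
`r + s` whose last `s` steps spell `m` in binary. -/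
def treeLeaves (s r : ℕ) : Finset (List Bool) :=
  leavesBelow s (2 ^ s) r []

theorem mem_treeLeaves {s r : ℕ} {l : List Bool} : l ∈ treeLeaves s r ↔
    ∃ y z : List Bool, y.length < 2 ^ s ∧ z.length = r ∧ y ++ (bitWord s y.length ++ z) = l := by
  simp only [treeLeaves, mem_leavesBelow, List.append_nil]

theorem le_length_of_mem_treeLeaves {s r : ℕ} {l : List Bool} (hl : l ∈ treeLeaves s r) :
    r + s ≤ l.length := by
  obtain ⟨y, z, -, rfl, rfl⟩ := mem_treeLeaves.1 hl
  simp only [List.length_append, length_bitWord]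
  omega

theorem filter_treeLeaves_subset_of_length_le {s r : ℕ} {v : List Bool} (hv : v.length ≤ r) :
    {l ∈ treeLeaves s r | v ∈ pathEdge (r + s + 1) l} ⊆
      leavesBelow s (v.length + 1) (r - v.length) v := by
  intro l hl
  rw [mem_filter, mem_treeLeaves, mem_pathEdge] at hl
  obtain ⟨⟨y, z, -, hz, rfl⟩, hvl, hlt⟩ := hl
  obtain ⟨z', rfl⟩ : v <:+ z := by
    refine List.suffix_of_suffix_length_le hvl ?_ (hz ▸ hv)
    exact (List.suffix_append _ z).trans (List.suffix_append _ _)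
  simp only [List.length_append, length_bitWord] at hz hlt
  exact mem_leavesBelow.2 ⟨y, z', by omega, by omega, rfl⟩

theorem filter_treeLeaves_subset_of_le_length {s r n : ℕ} {v : List Bool} (hv : r ≤ v.length) :
    {l ∈ treeLeaves s r | v ∈ pathEdge n l} ⊆
      leavesBelow s (2 ^ s) 0 (v.drop (v.length - r)) := by
  intro l hl
  rw [mem_filter, mem_treeLeaves, mem_pathEdge] at hl
  obtain ⟨⟨y, z, hy, hz, rfl⟩, hvl, -⟩ := hl
  obtain ⟨t, rfl⟩ : z <:+ v := by
    refine List.suffix_of_suffix_length_le ?_ hvl (hz ▸ hv)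
    exact (List.suffix_append _ z).trans (List.suffix_append _ _)
  exact mem_leavesBelow.2 ⟨y, [], hy, rfl, by simp [← hz]⟩

theorem card_filter_treeLeaves_le {s r : ℕ} (hsr : 2 ^ s ≤ r + 1) (v : List Bool) :
    #{l ∈ treeLeaves s r | v ∈ pathEdge (r + s + 1) l} ≤ 2 ^ (r + 1) := by
  rcases le_total v.length r with hv | hv
  · calc _ ≤ #(leavesBelow s (v.length + 1) (r - v.length) v) :=
          card_le_card (filter_treeLeaves_subset_of_length_le hv)
      _ ≤ 2 ^ (v.length + 1 + (r - v.length)) := card_leavesBelow_le _ _ _ _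
      _ = 2 ^ (r + 1) := by congr 1; omega
  · calc _ ≤ #(leavesBelow s (2 ^ s) 0 (v.drop (v.length - r))) :=
          card_le_card (filter_treeLeaves_subset_of_le_length hv)
      _ ≤ 2 ^ 2 ^ s := card_leavesBelow_le _ _ _ _
      _ ≤ 2 ^ (r + 1) := Nat.pow_le_pow_right two_pos hsr

/-- The completion `p` of `v` to depth `r + s` is chosen to spell `0` if it has room for all `s`
steps of the code; otherwise it is so short that the depth `m` it happens to code is harmless. -/
theorem exists_bitWord_append_eq_append {s r : ℕ} (hsr : 2 ^ s ≤ r + 1) {v : List Bool}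
    (hv : v.length ≤ r + s) : ∃ (p : List Bool) (m : ℕ) (z : List Bool),
      m < 2 ^ s ∧ z.length = r ∧ bitWord s m ++ z = p ++ v ∧ m + p.length ≤ r + s := by
  rcases le_or_gt v.length r with hvr | hvr
  · refine ⟨bitWord s 0 ++ List.replicate (r - v.length) false, 0,
      List.replicate (r - v.length) false ++ v, by positivity, ?_, by simp, ?_⟩ <;>
    · simp only [List.length_append, List.length_replicate, length_bitWord]
      omega
  · set p := List.replicate (r + s - v.length) false
    have hplen : p.length = r + s - v.length := List.length_replicate
    have hlen : (p ++ v).length = r + s := by rw [List.length_append]; omega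
    have htake : ((p ++ v).take s).length = s := by rw [List.length_take]; omega
    obtain ⟨m, hm, hmw⟩ := exists_bitWord_eq ((p ++ v).take s)
    rw [htake] at hm hmw
    refine ⟨p, m, (p ++ v).drop s, hm, ?_, ?_, by omega⟩
    · rw [List.length_drop]; omega
    · rw [hmw, List.take_append_drop]

theorem exists_mem_pathEdge_of_length_le {s r : ℕ} (hsr : 2 ^ s ≤ r + 1) {v : List Bool}
    (hv : v.length ≤ r + s) : ∃ l ∈ treeLeaves s r, v ∈ pathEdge (r + s + 1) l := by
  obtain ⟨p, m, z, hm, hz, hmz, hmp⟩ := exists_bitWord_append_eq_append hsr hv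
  have hlen := congrArg List.length hmz
  simp only [List.length_append, length_bitWord] at hlen
  refine ⟨List.replicate m false ++ (bitWord s m ++ z),
    mem_treeLeaves.2 ⟨List.replicate m false, z, by simpa using hm, hz, by simp⟩,
    mem_pathEdge.2 ⟨?_, ?_⟩⟩
  · rw [hmz]
    exact (List.suffix_append p v).trans (List.suffix_append _ _)
  · simp only [List.length_append, List.length_replicate, length_bitWord]
    omega

theorem exists_cons_mem_pathEdge_of_le_length {s r n : ℕ} {l v : List Bool}
    (hl : l ∈ treeLeaves s r) (hvl : v ∈ pathEdge n l) (hne : v ≠ l) (hv : r + s ≤ v.length)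
    (b : Bool) : ∃ l' ∈ treeLeaves s r, b :: v ∈ pathEdge n l' := by
  obtain ⟨y, z, hy, hz, rfl⟩ := mem_treeLeaves.1 hl
  rw [mem_pathEdge] at hvl
  obtain ⟨hvl, hlt⟩ := hvl
  obtain ⟨t, rfl⟩ : bitWord s y.length ++ z <:+ v := by
    refine List.suffix_of_suffix_length_le (List.suffix_append _ _) hvl ?_
    rw [List.length_append, length_bitWord]
    omega
  have hty : t.length < y.length := by
    have hlen := lt_of_le_of_ne hvl.length_le fun h => hne (hvl.eq_of_length h)
    simp only [List.length_append] at hlen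
    omega
  set y' := List.replicate (y.length - (t.length + 1)) false ++ b :: t with hy'
  have hylen : y'.length = y.length := by
    simp only [hy', List.length_append, List.length_replicate, List.length_cons]
    omega
  refine ⟨y' ++ (bitWord s y.length ++ z),
    mem_treeLeaves.2 ⟨y', z, hylen ▸ hy, hz, by rw [hylen]⟩, mem_pathEdge.2 ⟨?_, ?_⟩⟩
  · exact ⟨List.replicate (y.length - (t.length + 1)) false, by simp [hy']⟩
  · simp only [List.length_append, List.length_cons] at hlt ⊢
    omega

theorem makerWins_pathHypergraph_treeLeaves {s r : ℕ} (hsr : 2 ^ s ≤ r + 1) :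
    MakerWins (pathHypergraph (r + s + 1) (treeLeaves s r))
      ((pathHypergraph (r + s + 1) (treeLeaves s r)).biUnion id) := by
  refine makerWins_pathHypergraph (exists_mem_pathEdge_of_length_le hsr (Nat.zero_le _))
    fun l hl v hvl hne => ?_
  have hchild (b : Bool) :
      ∃ l' ∈ treeLeaves s r, b :: v ∈ pathEdge (r + s + 1) l' := by
    rcases lt_or_ge v.length (r + s) with hv | hv
    · exact exists_mem_pathEdge_of_length_le hsr hv
    · exact exists_cons_mem_pathEdge_of_le_length hl hvl hne hv b
  exact ⟨true, false, by decide, hchild true, hchild false⟩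

end Construction

theorem maker_win_max_degree_weak_general (n s : ℕ) (hs : 2 ^ s + s ≤ n) :
    ∃ E : Finset (Finset (List Bool)),
      (∀ e ∈ E, e.card = n) ∧
      (∀ v : List Bool, (E.filter fun e => v ∈ e).card ≤ 2 ^ (n - s)) ∧
      MakerWins E (E.biUnion id) := by
  obtain ⟨r, rfl⟩ : ∃ r, n = r + s + 1 :=
    ⟨n - s - 1, by have := Nat.two_pow_pos s; omega⟩
  have hsr : 2 ^ s ≤ r + 1 := by omega
  refine ⟨pathHypergraph (r + s + 1) (treeLeaves s r), fun e he => ?_, fun v => ?_,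
    makerWins_pathHypergraph_treeLeaves hsr⟩
  · obtain ⟨l, hl, rfl⟩ := mem_image.1 he
    exact card_pathEdge (Nat.succ_le_succ (le_length_of_mem_treeLeaves hl))
  · rw [show r + s + 1 - s = r + 1 by omega]
    exact (degree_pathHypergraph_le _ _ v).trans (card_filter_treeLeaves_le hsr v)

/-- There is an `n`-uniform hypergraph with maximum degree at most `2^(n+1)/n`
(for `n` a sufficiently large power of 2) on which Maker has a winning strategy. -/
theorem maker_win_max_degree_weak : ∃ n₀ : ℕ, ∀ n : ℕ, n₀ ≤ n → (∃ k, n = 2 ^ k) →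
    ∃ E : Finset (Finset (List Bool)),
      (∀ e ∈ E, e.card = n) ∧
      (∀ v : List Bool, n * (E.filter fun e => v ∈ e).card ≤ 2 ^ (n + 1)) ∧
      MakerWins E (E.biUnion id) := by
  refine ⟨0, ?_⟩
  rintro _ - ⟨k, rfl⟩
  have hlt : k < 2 ^ k := Nat.lt_two_pow_self
  have hk : 2 ^ (k - 1) + (k - 1) ≤ 2 ^ k := by
    rcases k with _ | k
    · rfl
    · simpa [pow_succ, mul_two] using Nat.lt_two_pow_self.le
  obtain ⟨E, hcard, hdeg, hwin⟩ := maker_win_max_degree_weak_general (2 ^ k) (k - 1) hk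
  refine ⟨E, hcard, fun v => (Nat.mul_le_mul_left _ (hdeg v)).trans ?_, hwin⟩
  rw [← pow_add]
  exact Nat.pow_le_pow_right two_pos (by omega)
end
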